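/- arXiv:1405.5606 — 2 statements merged into one kernel-verified Lean document; each statement's English description precedes it below -/
import Mathlib

section
/- For every m ∈ ℕ and every n ≥ 4 (as well as for an unbounded number of components), the family of languages of index at most m generated by CD grammar systems with at most n context-free components working in the (t∧=m)-mode is strictly contained in the unrestricted family: L_m(CD_n, CF[−λ], (t∧=m)) ⊊ L(CD_n, CF[−λ], (t∧=m)), both with and without erasing rules. -/
namespace CDHybrid

/-- Symbols: nonterminals are natural numbers, terminals come from `T`. -/
abbrev Symb (T : Type) := ℕ ⊕ T

/-- Sentential forms. -/
abbrev SForm (T : Type) := List (Symb T)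

/-- A context-free rule `A → z`. -/
abbrev Rule (T : Type) := ℕ × SForm T

/-- Number of nonterminal occurrences in a sentential form. -/
def ntCount {T : Type} (x : SForm T) : ℕ := (x.filter Sum.isLeft).length

/-- One rewriting step using some rule of the rule set `P`. -/
def RStep {T : Type} (P : List (Rule T)) (x y : SForm T) : Prop :=
  ∃ r ∈ P, ∃ u v : SForm T, x = u ++ Sum.inl r.1 :: v ∧ y = u ++ r.2 ++ v

/-- `m`-step derivation using only rules of `P`. -/
def StepsN {T : Type} (P : List (Rule T)) : ℕ → SForm T → SForm T → Prop
  | 0, x, y => x = y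
  | m + 1, x, y => ∃ z, RStep P x z ∧ StepsN P m z y

/-- `m`-step derivation using only rules of `P`, all intermediate (and the final)
sentential forms having at most `b` occurrences of nonterminals. -/
def StepsNB {T : Type} (P : List (Rule T)) (b : ℕ) : ℕ → SForm T → SForm T → Prop
  | 0, x, y => x = y
  | m + 1, x, y => ∃ z, RStep P x z ∧ ntCount z ≤ b ∧ StepsNB P b m z y

/-- Derivation modes of CD grammar systems. -/
inductive Mode where
  | eq : ℕ → Mode
  | le : ℕ → Mode
  | ge : ℕ → Mode
  | star : Mode
  | t : Mode
  | conj : Mode → Mode → Mode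

/-- The predicate of a derivation mode: `modeOK P f m y` holds if an `m`-step
derivation by the component `P` ending in `y` is acceptable for mode `f`. -/
def modeOK {T : Type} (P : List (Rule T)) : Mode → ℕ → SForm T → Prop
  | .eq k, m, _ => m = k
  | .le k, m, _ => m ≤ k
  | .ge k, m, _ => k ≤ m
  | .star, _, _ => True
  | .t, _, y => ¬ ∃ z, RStep P y z
  | .conj f g, m, y => modeOK P f m y ∧ modeOK P g m y

/-- A CD grammar system with context-free components. -/
structure CDGS (T : Type) where
  deg : ℕ
  start : ℕ
  comp : Fin deg → List (Rule T)

/-- λ-freeness: no erasing rules. -/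
def CDGS.LamFree {T : Type} (G : CDGS T) : Prop :=
  ∀ i : Fin G.deg, ∀ r ∈ G.comp i, r.2 ≠ []

/-- One derivation step of a component of `G` in mode `f`. -/
def CDGS.ModeStep {T : Type} (G : CDGS T) (f : Mode) (x y : SForm T) : Prop :=
  ∃ i : Fin G.deg, ∃ m : ℕ, StepsN (G.comp i) m x y ∧ modeOK (G.comp i) f m y

/-- One derivation step of a component of `G` in mode `f`, with all produced
sentential forms having at most `b` nonterminal occurrences. -/
def CDGS.ModeStepB {T : Type} (G : CDGS T) (f : Mode) (b : ℕ) (x y : SForm T) : Prop :=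
  ∃ i : Fin G.deg, ∃ m : ℕ, StepsNB (G.comp i) b m x y ∧ modeOK (G.comp i) f m y

/-- The language generated by `G` in mode `f`. -/
def CDGS.lang {T : Type} (G : CDGS T) (f : Mode) : Set (List T) :=
  { w | Relation.TransGen (G.ModeStep f) [Sum.inl G.start] (w.map Sum.inr) }

/-- The words of the language of `G` in mode `f` possessing a derivation of index
at most `b`, i.e., all sentential forms occurring in it have at most `b`
nonterminal occurrences. -/
def CDGS.langB {T : Type} (G : CDGS T) (f : Mode) (b : ℕ) : Set (List T) :=
  { w | ntCount ([Sum.inl G.start] : SForm T) ≤ b ∧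
      Relation.TransGen (G.ModeStepB f b) [Sum.inl G.start] (w.map Sum.inr) }

/-- Two languages are considered equal iff they differ at most in the empty word. -/
def EqL {T : Type} (L₁ L₂ : Set (List T)) : Prop := L₁ \ {[]} = L₂ \ {[]}

/-- The family `L(CD_n, CF[−λ], f)`; `lf = true` forbids erasing rules. -/
def CDFam (T : Type) (lf : Bool) (n : ℕ) (f : Mode) : Set (Set (List T)) :=
  { L | ∃ G : CDGS T, G.deg ≤ n ∧ (lf = true → G.LamFree) ∧ EqL (G.lang f) L }

/-- The family `L(CD_∞, CF[−λ], f)`. -/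
def CDFamInf (T : Type) (lf : Bool) (f : Mode) : Set (Set (List T)) :=
  { L | ∃ G : CDGS T, (lf = true → G.LamFree) ∧ EqL (G.lang f) L }

/-- The family `L_m(CD_n, CF[−λ], f)` of such languages of index at most `m`. -/
def CDFamInd (T : Type) (lf : Bool) (n : ℕ) (f : Mode) (m : ℕ) : Set (Set (List T)) :=
  { L | ∃ G : CDGS T, G.deg ≤ n ∧ (lf = true → G.LamFree) ∧ EqL (G.lang f) L ∧
      G.lang f ⊆ G.langB f m }

/-- The family `L_m(CD_∞, CF[−λ], f)`. -/
def CDFamIndInf (T : Type) (lf : Bool) (f : Mode) (m : ℕ) : Set (Set (List T)) :=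
  { L | ∃ G : CDGS T, (lf = true → G.LamFree) ∧ EqL (G.lang f) L ∧ G.lang f ⊆ G.langB f m }

/-- The family `L_fin(CD_∞, CF[−λ], f)`. -/
def CDFamFinInf (T : Type) (lf : Bool) (f : Mode) : Set (Set (List T)) :=
  { L | ∃ m : ℕ, 1 ≤ m ∧ L ∈ CDFamIndInf T lf f m }

/-- A context-free grammar. -/
structure CFG (T : Type) where
  start : ℕ
  rules : List (Rule T)

/-- The language generated by a context-free grammar. -/
def CFG.lang {T : Type} (G : CFG T) : Set (List T) :=
  { w | Relation.ReflTransGen (RStep G.rules) [Sum.inl G.start] (w.map Sum.inr) }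

/-- The words of `G.lang` having a derivation of index at most `m`. -/
def CFG.langB {T : Type} (G : CFG T) (m : ℕ) : Set (List T) :=
  { w | ntCount ([Sum.inl G.start] : SForm T) ≤ m ∧
      Relation.ReflTransGen (fun x y => RStep G.rules x y ∧ ntCount y ≤ m)
        [Sum.inl G.start] (w.map Sum.inr) }

/-- The family `L(CF)` of context-free languages. -/
def CFFam (T : Type) : Set (Set (List T)) := { L | ∃ G : CFG T, EqL G.lang L }

/-- The family `L_m(CF)` of context-free languages of index at most `m`. -/
def CFFamInd (T : Type) (m : ℕ) : Set (Set (List T)) :=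
  { L | ∃ G : CFG T, EqL G.lang L ∧ G.lang ⊆ G.langB m }

/-- The family `L_fin(CF)` of context-free languages of finite index. -/
def CFFamFin (T : Type) : Set (Set (List T)) :=
  { L | ∃ m : ℕ, 1 ≤ m ∧ L ∈ CFFamInd T m }

/-- A grammar is linear if every right-hand side contains at most one nonterminal. -/
def CFG.Linear {T : Type} (G : CFG T) : Prop := ∀ r ∈ G.rules, ntCount r.2 ≤ 1

/-- The family `L(LIN)` of linear context-free languages. -/
def LinFam (T : Type) : Set (Set (List T)) :=
  { L | ∃ G : CFG T, G.Linear ∧ EqL G.lang L }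

/-- The family `L(FIN)` of finite languages. -/
def FinFam (T : Type) : Set (Set (List T)) := { L | L.Finite }

/-- A programmed grammar with context-free rules. -/
structure PG (T : Type) where
  start : ℕ
  nLab : ℕ
  rule : Fin nLab → Rule T
  succ : Fin nLab → Set (Fin nLab)
  fail : Fin nLab → Set (Fin nLab)

def PG.LamFree {T : Type} (G : PG T) : Prop := ∀ r : Fin G.nLab, (G.rule r).2 ≠ []

/-- No appearance checking: all failure fields are empty. -/
def PG.NoAC {T : Type} (G : PG T) : Prop := ∀ r : Fin G.nLab, G.fail r = ∅

/-- One step of a programmed grammar on pairs (sentential form, label). -/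
def PG.PStep {T : Type} (G : PG T) (p q : SForm T × Fin G.nLab) : Prop :=
  (∃ u v : SForm T, p.1 = u ++ Sum.inl (G.rule p.2).1 :: v ∧
      q.1 = u ++ (G.rule p.2).2 ++ v ∧ q.2 ∈ G.succ p.2) ∨
  (Sum.inl (G.rule p.2).1 ∉ p.1 ∧ q.1 = p.1 ∧ q.2 ∈ G.fail p.2)

/-- The language generated by a programmed grammar. -/
def PG.lang {T : Type} (G : PG T) : Set (List T) :=
  { w | ∃ r₁ r₂ : Fin G.nLab,
      Relation.ReflTransGen G.PStep ([Sum.inl G.start], r₁) (w.map Sum.inr, r₂) }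

/-- The words of `G.lang` having a derivation of index at most `m`. -/
def PG.langB {T : Type} (G : PG T) (m : ℕ) : Set (List T) :=
  { w | ∃ r₁ r₂ : Fin G.nLab, ntCount ([Sum.inl G.start] : SForm T) ≤ m ∧
      Relation.ReflTransGen (fun p q => G.PStep p q ∧ ntCount q.1 ≤ m)
        ([Sum.inl G.start], r₁) (w.map Sum.inr, r₂) }

/-- The family `L_m(P, CF[−λ][, ac])`: programmed languages of index at most `m`;
`ac = false` forbids appearance checking, `lf = true` forbids erasing rules. -/
def PFamInd (T : Type) (lf ac : Bool) (m : ℕ) : Set (Set (List T)) :=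
  { L | ∃ G : PG T, (lf = true → G.LamFree) ∧ (ac = false → G.NoAC) ∧
      EqL G.lang L ∧ G.lang ⊆ G.langB m }

/-- The family `L_fin(P, CF[−λ][, ac])` of programmed languages of finite index. -/
def PFamFin (T : Type) (lf ac : Bool) : Set (Set (List T)) :=
  { L | ∃ m : ℕ, 1 ≤ m ∧ L ∈ PFamInd T lf ac m }

/-!
The witness system produces words `a₀ ^ p ⋯ a₂ₘ₋₁ ^ p a₂ₘ ^ q ⋯ a₄ₘ₋₁ ^ q` with `p ≤ q`, among them
all those with `p = q ≥ 1`. Its sentential forms consist of `2 * m` blocks `c ^ i A d ^ i`, in two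
groups of `m`. In the mode `t ∧ = m` a component must rewrite the nonterminals of exactly one of the
groups, so the groups advance alternately, which keeps `q` from falling behind `p`.

Conversely, suppose a system generates such a language with index `b < 2 * m`, and consider a
derivation of the word with `p = q = n`. The first sentential form `y` containing all `4 * m`
letters contains one of them, say `i`, only boundedly often, since a single mode step produces a
bounded number of letters. On the other hand each of the at most `b` nonterminals of `y` generates
an infix of the sorted word, and such an infix contains at most two letters without containing all
their occurrences; as `2 * b < 4 * m`, some letter `j` occurs `n` times in `y` already. By the
pigeonhole principle two different `n`, `n'` lead to the same `i` and `j`, to the same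
nonterminals in `y`, and to the same number of occurrences of `i` in `y`. Exchanging the tails of
the two derivations yields words with `n` and `n'`, respectively `n'` and `n`, occurrences of `i`
and `j`, although one of these letters never occurs more often than the other.
-/

open Relation

section Rewriting

variable {T : Type} {P : List (Rule T)} {x x' y y' z : SForm T} {k l : ℕ}

theorem exists_rStep_iff : (∃ y, RStep P x y) ↔ ∃ r ∈ P, Sum.inl r.1 ∈ x := by
  constructor
  · rintro ⟨-, r, hr, u, v, rfl, -⟩
    exact ⟨r, hr, by simp⟩
  · rintro ⟨r, hr, hx⟩
    obtain ⟨u, v, rfl⟩ := List.append_of_mem hx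
    exact ⟨_, r, hr, u, v, rfl, rfl⟩

theorem RStep.append_right (h : RStep P x y) (z : SForm T) : RStep P (x ++ z) (y ++ z) := by
  obtain ⟨r, hr, u, v, rfl, rfl⟩ := h
  exact ⟨r, hr, u, v ++ z, by simp, by simp⟩

theorem RStep.append_left (h : RStep P x y) (z : SForm T) : RStep P (z ++ x) (z ++ y) := by
  obtain ⟨r, hr, u, v, rfl, rfl⟩ := h
  exact ⟨r, hr, z ++ u, v, by simp, by simp⟩

theorem StepsN.trans (hxy : StepsN P k x y) (hyz : StepsN P l y z) : StepsN P (k + l) x z := by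
  induction k generalizing x with
  | zero =>
    obtain rfl : x = y := hxy
    simpa using hyz
  | succ k ih =>
    obtain ⟨x₁, hx, hy⟩ := hxy
    rw [Nat.add_right_comm]
    exact ⟨x₁, hx, ih hy⟩

theorem StepsN.append_right (h : StepsN P k x y) (z : SForm T) :
    StepsN P k (x ++ z) (y ++ z) := by
  induction k generalizing x with
  | zero => exact congrArg (· ++ z) h
  | succ k ih =>
    obtain ⟨x₁, hx, hy⟩ := h
    exact ⟨x₁ ++ z, hx.append_right z, ih hy⟩

theorem StepsN.append_left (h : StepsN P k x y) (z : SForm T) :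
    StepsN P k (z ++ x) (z ++ y) := by
  induction k generalizing x with
  | zero => exact congrArg (z ++ ·) h
  | succ k ih =>
    obtain ⟨x₁, hx, hy⟩ := h
    exact ⟨z ++ x₁, hx.append_left z, ih hy⟩

theorem StepsN.append (hx : StepsN P k x x') (hy : StepsN P l y y') :
    StepsN P (k + l) (x ++ y) (x' ++ y') :=
  (hx.append_right y).trans (hy.append_left x')

theorem stepsN_flatMap {ι : Type} {s : List ι} {f g : ι → SForm T}
    (h : ∀ i ∈ s, StepsN P k (f i) (g i)) :
    StepsN P (s.length * k) (s.flatMap f) (s.flatMap g) := by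
  induction s with
  | nil => simp [StepsN]
  | cons i s ih =>
    rw [List.forall_mem_cons] at h
    simpa [Nat.succ_mul, Nat.add_comm] using h.1.append (ih h.2)

theorem stepsN_of_forall_rStep {f : ℕ → SForm T} (h : ∀ j < k, RStep P (f j) (f (j + 1))) :
    StepsN P k (f 0) (f k) := by
  induction k generalizing f with
  | zero => rfl
  | succ k ih =>
    exact ⟨f 1, h 0 k.succ_pos, ih fun j hj => h (j + 1) (Nat.succ_lt_succ hj)⟩

/-- A rule set is deterministic if no two of its rules rewrite the same nonterminal. All maximal
derivations from a given sentential form then have the same length and the same result. -/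
def Deterministic (P : List (Rule T)) : Prop :=
  ∀ r ∈ P, ∀ r' ∈ P, r.1 = r'.1 → r = r'

theorem Deterministic.diamond (hP : Deterministic P) (hy : RStep P x y) (hz : RStep P x z) :
    y = z ∨ ∃ w, RStep P y w ∧ RStep P z w := by
  obtain ⟨r, hr, u, v, rfl, rfl⟩ := hy
  obtain ⟨r', hr', u', v', hx, rfl⟩ := hz
  rcases List.append_eq_append_iff.1 hx with ⟨t, rfl, ht⟩ | ⟨t, rfl, ht⟩
  · rcases List.cons_eq_append_iff.1 ht with ⟨rfl, ht⟩ | ⟨t, rfl, rfl⟩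
    · obtain ⟨hhead, rfl⟩ := List.cons.inj ht
      obtain rfl := hP r hr r' hr' (Sum.inl_injective hhead)
      exact Or.inl (by simp)
    · exact Or.inr ⟨u ++ r.2 ++ t ++ r'.2 ++ v', ⟨r', hr', u ++ r.2 ++ t, v', by simp, by simp⟩,
        r, hr, u, t ++ r'.2 ++ v', by simp, by simp⟩
  · rcases List.cons_eq_append_iff.1 ht with ⟨rfl, ht⟩ | ⟨t, rfl, rfl⟩
    · obtain ⟨hhead, rfl⟩ := List.cons.inj ht
      obtain rfl := hP r hr r' hr' (Sum.inl_injective hhead.symm)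
      exact Or.inl (by simp)
    · exact Or.inr ⟨u' ++ r'.2 ++ t ++ r.2 ++ v, ⟨r', hr', u', t ++ r.2 ++ v, by simp, by simp⟩,
        r, hr, u' ++ r'.2 ++ t, v, by simp, by simp⟩

theorem Deterministic.stepsN_of_rStep (hP : Deterministic P) (hx : RStep P x x')
    (hy : StepsN P k x y) (hterm : ¬∃ z, RStep P y z) : ∃ l, k = l + 1 ∧ StepsN P l x' y := by
  induction k generalizing x x' with
  | zero =>
    obtain rfl : x = y := hy
    exact absurd ⟨x', hx⟩ hterm
  | succ k ih =>
    obtain ⟨x₁, hx₁, hy⟩ := hy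
    rcases hP.diamond hx hx₁ with rfl | ⟨x₂, hx', hx₂⟩
    · exact ⟨k, rfl, hy⟩
    · obtain ⟨l, rfl, hl⟩ := ih hx₂ hy
      exact ⟨l + 1, rfl, x₂, hx', hl⟩

theorem Deterministic.stepsN_unique (hP : Deterministic P) (hy : StepsN P k x y)
    (hyterm : ¬∃ w, RStep P y w) (hz : StepsN P l x z) (hzterm : ¬∃ w, RStep P z w) :
    k = l ∧ y = z := by
  induction k generalizing x l with
  | zero =>
    obtain rfl : x = y := hy
    cases l with
    | zero => exact ⟨rfl, hz⟩
    | succ l => exact absurd (hz.imp fun _ h => h.1) hyterm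
  | succ k ih =>
    obtain ⟨x₁, hx, hy⟩ := hy
    obtain ⟨l, rfl, hl⟩ := hP.stepsN_of_rStep hx hz hzterm
    obtain ⟨rfl, rfl⟩ := ih hy hl
    exact ⟨rfl, rfl⟩

end Rewriting

section Skeleton

variable {T : Type}

/-- The sequence of nonterminals of a sentential form. It determines which derivations are possible
from that form; the terminals are merely carried along. -/
def skeleton (x : SForm T) : List ℕ := x.filterMap Sum.getLeft?

@[simp]
theorem skeleton_append (x y : SForm T) : skeleton (x ++ y) = skeleton x ++ skeleton y :=
  List.filterMap_append

@[simp]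
theorem skeleton_cons_inl (A : ℕ) (x : SForm T) :
    skeleton (Sum.inl A :: x) = A :: skeleton x :=
  rfl

@[simp]
theorem skeleton_cons_inr (a : T) (x : SForm T) : skeleton (Sum.inr a :: x) = skeleton x :=
  rfl

@[simp]
theorem skeleton_map_inr (w : List T) : skeleton (w.map Sum.inr) = [] := by
  induction w with
  | nil => rfl
  | cons _ _ ih => exact ih

@[simp]
theorem mem_skeleton {A : ℕ} {x : SForm T} : A ∈ skeleton x ↔ Sum.inl A ∈ x := by
  simp [skeleton, Sum.getLeft?_eq_some_iff]

@[simp]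
theorem ntCount_cons_inl (A : ℕ) (x : SForm T) :
    ntCount (Sum.inl A :: x) = ntCount x + 1 :=
  rfl

@[simp]
theorem ntCount_cons_inr (a : T) (x : SForm T) : ntCount (Sum.inr a :: x) = ntCount x :=
  rfl

theorem length_skeleton (x : SForm T) : (skeleton x).length = ntCount x := by
  induction x with
  | nil => rfl
  | cons c x ih => cases c <;> simp [ih]

theorem exists_eq_map_inr_of_skeleton_eq_nil {x : SForm T} (hx : skeleton x = []) :
    ∃ w : List T, x = w.map Sum.inr := by
  induction x with
  | nil => exact ⟨[], rfl⟩
  | cons c x ih =>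
    cases c with
    | inl A => exact absurd hx (List.cons_ne_nil _ _)
    | inr a =>
      obtain ⟨w, rfl⟩ := ih hx
      exact ⟨a :: w, rfl⟩

theorem exists_eq_append_cons_of_skeleton_eq {x : SForm T} {A : ℕ} {l₁ l₂ : List ℕ}
    (hx : skeleton x = l₁ ++ A :: l₂) :
    ∃ u v, x = u ++ Sum.inl A :: v ∧ skeleton u = l₁ ∧ skeleton v = l₂ := by
  obtain ⟨u, t, rfl, hu, ht⟩ := List.filterMap_eq_append_iff.1 hx
  obtain ⟨t, c, v, rfl, htnil, hc, hv⟩ := List.filterMap_eq_cons_iff.1 ht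
  obtain rfl := Sum.getLeft?_eq_some_iff.1 hc
  refine ⟨u ++ t, v, by simp, ?_, hv⟩
  rw [skeleton_append]
  simp only [skeleton, hu, List.filterMap_eq_nil_iff.2 htnil, List.append_nil]

theorem exists_rStep_congr {P : List (Rule T)} {x x' : SForm T} (h : skeleton x = skeleton x') :
    (∃ y, RStep P x y) ↔ ∃ y, RStep P x' y := by
  simp only [exists_rStep_iff, ← mem_skeleton, h]

theorem modeOK_congr {P : List (Rule T)} {f : Mode} {k : ℕ} {x x' : SForm T}
    (h : skeleton x = skeleton x') : modeOK P f k x ↔ modeOK P f k x' := by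
  induction f with
  | t => exact not_congr (exists_rStep_congr h)
  | conj f g hf hg => exact and_congr hf hg
  | _ => rfl

/-- The sequence of terminals of a sentential form. -/
def terminals (x : SForm T) : List T := x.filterMap Sum.getRight?

@[simp]
theorem terminals_append (x y : SForm T) : terminals (x ++ y) = terminals x ++ terminals y :=
  List.filterMap_append

@[simp]
theorem terminals_cons_inl (A : ℕ) (x : SForm T) :
    terminals (Sum.inl A :: x) = terminals x :=
  rfl

@[simp]
theorem terminals_cons_inr (a : T) (x : SForm T) :
    terminals (Sum.inr a :: x) = a :: terminals x :=
  rfl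

@[simp]
theorem terminals_map_inr (w : List T) : terminals (w.map Sum.inr) = w := by
  induction w with
  | nil => rfl
  | cons a w ih => exact congrArg (a :: ·) ih

variable [DecidableEq T]

/-- A relation between sentential forms is determined by skeletons if each of its steps can be
simulated from every form with the same skeleton, producing the same new skeleton and adding the
same number of occurrences of each terminal. The last equation is stated without subtraction. -/
def SkeletonDetermined (R : SForm T → SForm T → Prop) : Prop :=
  ∀ ⦃x y x' : SForm T⦄, R x y → skeleton x' = skeleton x →
    ∃ y', R x' y' ∧ skeleton y' = skeleton y ∧
      ∀ a : T, (terminals y').count a + (terminals x).count a =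
        (terminals y).count a + (terminals x').count a

theorem skeletonDetermined_rStep (P : List (Rule T)) : SkeletonDetermined (RStep P) := by
  rintro - - x' ⟨r, hr, u, v, rfl, rfl⟩ hx'
  rw [skeleton_append, skeleton_cons_inl] at hx'
  obtain ⟨u', v', rfl, hu, hv⟩ := exists_eq_append_cons_of_skeleton_eq hx'
  refine ⟨u' ++ r.2 ++ v', ⟨r, hr, u', v', rfl, rfl⟩, by simp [hu, hv], fun a => ?_⟩
  simp only [terminals_append, terminals_cons_inl, List.count_append]
  omega

theorem skeletonDetermined_stepsN (P : List (Rule T)) (k : ℕ) :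
    SkeletonDetermined (StepsN P k) := by
  induction k with
  | zero =>
    intro x y x' hxy hx'
    obtain rfl : x = y := hxy
    exact ⟨x', rfl, hx', fun a => Nat.add_comm _ _⟩
  | succ k ih =>
    rintro x y x' ⟨z, hxz, hzy⟩ hx'
    obtain ⟨z', hxz', hz', hcount⟩ := skeletonDetermined_rStep P hxz hx'
    obtain ⟨y', hzy', hy', hcount'⟩ := ih hzy hz'
    exact ⟨y', ⟨z', hxz', hzy'⟩, hy', fun a => by grind⟩

theorem skeletonDetermined_modeStep (G : CDGS T) (f : Mode) :
    SkeletonDetermined (G.ModeStep f) := by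
  rintro x y x' ⟨i, k, hxy, hf⟩ hx'
  obtain ⟨y', hxy', hy', hcount⟩ := skeletonDetermined_stepsN (G.comp i) k hxy hx'
  exact ⟨y', ⟨i, k, hxy', (modeOK_congr hy').2 hf⟩, hy', hcount⟩

theorem SkeletonDetermined.reflTransGen {R : SForm T → SForm T → Prop}
    (hR : SkeletonDetermined R) : SkeletonDetermined (ReflTransGen R) := by
  intro x y x' hxy hx'
  induction hxy with
  | refl => exact ⟨x', .refl, hx', fun a => Nat.add_comm _ _⟩
  | tail _ hzy ih =>
    obtain ⟨z', hxz', hz', hcount⟩ := ih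
    obtain ⟨y', hzy', hy', hcount'⟩ := hR hzy hz'
    exact ⟨y', hxz'.tail hzy', hy', fun a => by grind⟩

theorem CDGS.exists_mem_lang_splice {G : CDGS T} {f : Mode} {y y' : SForm T} {w : List T}
    (hy : ReflTransGen (G.ModeStep f) y (w.map Sum.inr))
    (hy' : TransGen (G.ModeStep f) [Sum.inl G.start] y')
    (hskel : skeleton y = skeleton y') :
    ∃ u ∈ G.lang f, ∀ a,
      u.count a + (terminals y).count a = w.count a + (terminals y').count a := by
  obtain ⟨z, hz, hznil, hcount⟩ :=
    (skeletonDetermined_modeStep G f).reflTransGen hy hskel.symm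
  rw [skeleton_map_inr] at hznil
  obtain ⟨u, rfl⟩ := exists_eq_map_inr_of_skeleton_eq_nil hznil
  refine ⟨u, hy'.trans_left hz, fun a => ?_⟩
  simpa only [terminals_map_inr] using hcount a

end Skeleton

section Expansion

variable {T : Type} {x z : SForm T} {w w' : List T}

/-- `Expands x w` means that `w` is obtained from the sentential form `x` by replacing each
nonterminal occurrence by some terminal word. -/
inductive Expands : SForm T → List T → Prop
  | nil : Expands [] []
  | terminal (a : T) {x : SForm T} {w : List T} : Expands x w → Expands (Sum.inr a :: x) (a :: w)
  | nonterminal (A : ℕ) (y : List T) {x : SForm T} {w : List T} :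
      Expands x w → Expands (Sum.inl A :: x) (y ++ w)

theorem expands_map_inr (w : List T) : Expands (w.map Sum.inr) w := by
  induction w with
  | nil => exact .nil
  | cons a w ih => exact .terminal a ih

theorem Expands.append (hx : Expands x w) (hz : Expands z w') : Expands (x ++ z) (w ++ w') := by
  induction hx with
  | nil => exact hz
  | terminal a _ ih => exact .terminal a ih
  | nonterminal A y _ ih => simpa using ih.nonterminal A y

theorem Expands.exists_eq_append (h : Expands (x ++ z) w) :
    ∃ w₁ w₂, w = w₁ ++ w₂ ∧ Expands x w₁ ∧ Expands z w₂ := by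
  induction x generalizing w with
  | nil => exact ⟨[], w, rfl, .nil, h⟩
  | cons c x ih =>
    cases h with
    | terminal a h =>
      obtain ⟨w₁, w₂, rfl, h₁, h₂⟩ := ih h
      exact ⟨a :: w₁, w₂, rfl, h₁.terminal a, h₂⟩
    | nonterminal A y h =>
      obtain ⟨w₁, w₂, rfl, h₁, h₂⟩ := ih h
      exact ⟨y ++ w₁, w₂, by simp, h₁.nonterminal A y, h₂⟩

theorem Expands.of_rStep {P : List (Rule T)} (hz : Expands z w) (hxz : RStep P x z) :
    Expands x w := by
  obtain ⟨r, -, u, v, rfl, rfl⟩ := hxz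
  obtain ⟨w₁₂, w₃, rfl, h, hv⟩ := hz.exists_eq_append
  obtain ⟨w₁, w₂, rfl, hu, -⟩ := Expands.exists_eq_append h
  simpa using hu.append (hv.nonterminal r.1 w₂)

theorem Expands.of_stepsN {P : List (Rule T)} {k : ℕ} (hz : Expands z w)
    (hxz : StepsN P k x z) : Expands x w := by
  induction k generalizing x with
  | zero =>
    obtain rfl : x = z := hxz
    exact hz
  | succ k ih =>
    obtain ⟨y, hxy, hyz⟩ := hxz
    exact (ih hyz).of_rStep hxy

theorem expands_of_reflTransGen {G : CDGS T} {f : Mode}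
    (h : ReflTransGen (G.ModeStep f) x (w.map Sum.inr)) : Expands x w := by
  induction h using ReflTransGen.head_induction_on with
  | refl => exact expands_map_inr w
  | head hxz _ ih =>
    obtain ⟨i, k, hsteps, -⟩ := hxz
    exact ih.of_stepsN hsteps

theorem Expands.exists_gaps [DecidableEq T] (h : Expands x w) :
    ∃ ys : List (List T), ys.length = ntCount x ∧ (∀ y ∈ ys, y <:+: w) ∧
      ∀ a, (terminals x).count a + ys.flatten.count a = w.count a := by
  induction h with
  | nil => exact ⟨[], rfl, by simp, fun _ => rfl⟩
  | @terminal a x w _ ih =>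
    obtain ⟨ys, hlen, hinfix, hcount⟩ := ih
    refine ⟨ys, by simp [hlen],
      fun y hy => (hinfix y hy).trans (List.suffix_cons a w).isInfix, fun b => ?_⟩
    grind [terminals_cons_inr]
  | @nonterminal A y x w _ ih =>
    obtain ⟨ys, hlen, hinfix, hcount⟩ := ih
    refine ⟨y :: ys, by simp [hlen],
      List.forall_mem_cons.2 ⟨(List.prefix_append y w).isInfix,
        fun z hz => (hinfix z hz).trans (List.suffix_append y w).isInfix⟩, fun b => ?_⟩
    grind [terminals_cons_inl]

end Expansion

section SortedWords

variable {T : Type} [LinearOrder T] {w y : List T}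

theorem count_eq_of_infix_of_lt_of_lt (hw : w.Pairwise (· ≤ ·)) (hy : y <:+: w) {a b c : T}
    (ha : a ∈ y) (hb : b ∈ y) (hac : a < c) (hcb : c < b) : y.count c = w.count c := by
  obtain ⟨u, v, rfl⟩ := hy
  rw [List.pairwise_append, List.pairwise_append] at hw
  obtain ⟨⟨-, -, huy⟩, -, hv⟩ := hw
  have hu_not : c ∉ u := fun hc => (huy c hc a ha).not_gt hac
  have hv_not : c ∉ v := fun hc => (hv b (List.mem_append_right u hb) c hc).not_gt hcb
  simp [List.count_append, List.count_eq_zero_of_not_mem hu_not,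
    List.count_eq_zero_of_not_mem hv_not]

theorem card_filter_mem_le_two_of_infix (hw : w.Pairwise (· ≤ ·)) (hy : y <:+: w) {s : Finset T}
    (hs : ∀ a ∈ s, y.count a ≠ w.count a) : (s.filter (· ∈ y)).card ≤ 2 := by
  by_contra! hcard
  let e := Finset.orderEmbOfCardLe _ hcard
  have he (i : Fin 3) : e i ∈ s ∧ e i ∈ y :=
    Finset.mem_filter.1 (Finset.orderEmbOfCardLe_mem _ hcard i)
  refine hs (e 1) (he 1).1 (count_eq_of_infix_of_lt_of_lt hw hy (he 0).2 (he 2).2 ?_ ?_) <;>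
    simp [e]

theorem Expands.exists_count_eq {x : SForm T} (h : Expands x w) (hw : w.Pairwise (· ≤ ·))
    {s : Finset T} (hcard : 2 * ntCount x < s.card) (hs : ∀ a ∈ s, a ∈ terminals x) :
    ∃ a ∈ s, (terminals x).count a = w.count a := by
  by_contra! hne
  obtain ⟨ys, hlen, hinfix, hcount⟩ := h.exists_gaps
  have hgap : ∀ y ∈ ys, ∀ a ∈ s, y.count a ≠ w.count a := by
    intro y hy a ha
    have hpos := List.count_pos_iff.2 (hs a ha)
    have hle := (List.sublist_flatten_of_mem hy).count_le a
    grind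
  have hcover : s ⊆ ys.toFinset.biUnion fun y => s.filter (· ∈ y) := by
    intro a ha
    have hpos : 0 < ys.flatten.count a := by grind
    obtain ⟨y, hy, hay⟩ := List.mem_flatten.1 (List.count_pos_iff.1 hpos)
    exact Finset.mem_biUnion.2 ⟨y, List.mem_toFinset.2 hy, Finset.mem_filter.2 ⟨ha, hay⟩⟩
  have : s.card ≤ 2 * ntCount x :=
    calc
      s.card ≤ _ := Finset.card_le_card hcover
      _ ≤ ys.toFinset.card * 2 := Finset.card_biUnion_le_card_mul _ _ _ fun y hy =>
        card_filter_mem_le_two_of_infix hw (hinfix y (List.mem_toFinset.1 hy))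
          (hgap y (List.mem_toFinset.1 hy))
      _ ≤ ys.length * 2 := Nat.mul_le_mul_right 2 (List.toFinset_card_le ys)
      _ = 2 * ntCount x := by rw [hlen, Nat.mul_comm]
  exact this.not_gt hcard

end SortedWords

section BoundedDerivations

variable {T : Type} {P : List (Rule T)} {G : CDGS T} {f : Mode} {x y : SForm T} {b k : ℕ}

theorem StepsNB.stepsN (h : StepsNB P b k x y) : StepsN P k x y := by
  induction k generalizing x with
  | zero => exact h
  | succ k ih =>
    obtain ⟨z, hxz, -, hzy⟩ := h
    exact ⟨z, hxz, ih hzy⟩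

theorem StepsNB.ntCount_le (h : StepsNB P b k x y) (hx : ntCount x ≤ b) : ntCount y ≤ b := by
  induction k generalizing x with
  | zero => exact (show x = y from h) ▸ hx
  | succ k ih =>
    obtain ⟨z, -, hz, hzy⟩ := h
    exact ih hzy hz

theorem CDGS.ModeStepB.modeStep (h : G.ModeStepB f b x y) : G.ModeStep f x y := by
  obtain ⟨i, k, hxy, hf⟩ := h
  exact ⟨i, k, hxy.stepsN, hf⟩

theorem CDGS.ModeStepB.ntCount_le (h : G.ModeStepB f b x y) (hx : ntCount x ≤ b) :
    ntCount y ≤ b := by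
  obtain ⟨i, k, hxy, -⟩ := h
  exact hxy.ntCount_le hx

theorem CDGS.ntCount_le_of_reflTransGen (h : ReflTransGen (G.ModeStepB f b) x y)
    (hx : ntCount x ≤ b) : ntCount y ≤ b := by
  induction h with
  | refl => exact hx
  | tail _ hstep ih => exact hstep.ntCount_le ih

theorem exists_reflTransGen_of_not_of {α : Type*} {r : α → α → Prop} {Q : α → Prop} {a c : α}
    (h : ReflTransGen r a c) (ha : ¬Q a) (hc : Q c) :
    ∃ d e, ReflTransGen r a d ∧ r d e ∧ ReflTransGen r e c ∧ ¬Q d ∧ Q e := by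
  induction h using ReflTransGen.head_induction_on with
  | refl => exact absurd hc ha
  | @head a d had hdc ih =>
    by_cases hd : Q d
    · exact ⟨a, d, .refl, had, hdc, ha, hd⟩
    · obtain ⟨d', e, hd', h⟩ := ih hd
      exact ⟨d', e, hd'.head had, h⟩

end BoundedDerivations

section Finiteness

variable {T : Type} {P : List (Rule T)} {G : CDGS T} {f : Mode} {x y : SForm T} {k l A : ℕ}

/-- The start symbol of a CD grammar system and the nonterminals on the right-hand sides of its
rules: the only ones which occur in its derivations. -/
def CDGS.nonterminals (G : CDGS T) : Set ℕ :=
  {A | A = G.start ∨ ∃ i, ∃ r ∈ G.comp i, Sum.inl A ∈ r.2}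

theorem CDGS.finite_rules (G : CDGS T) : {r | ∃ i, r ∈ G.comp i}.Finite := by
  simpa only [Set.ofPred_exists] using
    Set.finite_iUnion fun i => List.finite_toSet (G.comp i)

theorem CDGS.finite_nonterminals (G : CDGS T) : G.nonterminals.Finite := by
  have hrule (r : Rule T) : {A : ℕ | Sum.inl A ∈ r.2}.Finite :=
    (List.finite_toSet r.2).preimage Sum.inl_injective.injOn
  refine ((Set.finite_singleton G.start).union
    (G.finite_rules.biUnion fun r _ => hrule r)).subset ?_
  rintro A (rfl | ⟨i, r, hr, hA⟩)
  · exact Or.inl rfl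
  · exact Or.inr (Set.mem_biUnion (show ∃ i, r ∈ G.comp i from ⟨i, hr⟩) hA)

theorem CDGS.exists_length_le (G : CDGS T) : ∃ l, ∀ i, ∀ r ∈ G.comp i, r.2.length ≤ l := by
  obtain ⟨l, hl⟩ := (G.finite_rules.image fun r => r.2.length).bddAbove
  exact ⟨l, fun i r hr => hl ⟨r, ⟨i, hr⟩, rfl⟩⟩

theorem StepsN.mem_or_exists_mem (h : StepsN P k x y) (hA : Sum.inl A ∈ y) :
    Sum.inl A ∈ x ∨ ∃ r ∈ P, Sum.inl A ∈ r.2 := by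
  induction k generalizing x with
  | zero => exact Or.inl ((show x = y from h) ▸ hA)
  | succ k ih =>
    obtain ⟨z, ⟨r, hr, u, v, rfl, rfl⟩, hzy⟩ := h
    grind [ih hzy]

theorem CDGS.mem_nonterminals_of_reflTransGen
    (h : ReflTransGen (G.ModeStep f) [Sum.inl G.start] y) :
    ∀ A ∈ skeleton y, A ∈ G.nonterminals := by
  induction h with
  | refl => simp [skeleton, CDGS.nonterminals]
  | tail _ hstep ih =>
    obtain ⟨i, k, hsteps, -⟩ := hstep
    intro A hA
    rcases hsteps.mem_or_exists_mem (mem_skeleton.1 hA) with hA | ⟨r, hr, hA⟩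
    · exact ih A (mem_skeleton.2 hA)
    · exact Or.inr ⟨i, r, hr, hA⟩

theorem finite_setOf_length_le_forall_mem {α : Type*} {N : Set α} (hN : N.Finite) (b : ℕ) :
    {l : List α | l.length ≤ b ∧ ∀ A ∈ l, A ∈ N}.Finite := by
  have := hN.to_subtype
  refine ((List.finite_length_le N b).image (List.map Subtype.val)).subset ?_
  rintro l ⟨hlen, hl⟩
  lift l to List N using hl
  exact ⟨l, by simpa using hlen, rfl⟩

variable [DecidableEq T]

theorem StepsN.count_terminals_le (h : StepsN P k x y) (hl : ∀ r ∈ P, r.2.length ≤ l) (a : T) :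
    (terminals y).count a ≤ (terminals x).count a + k * l := by
  induction k generalizing x with
  | zero => exact (show x = y from h) ▸ Nat.le_add_right _ _
  | succ k ih =>
    obtain ⟨z, ⟨r, hr, u, v, rfl, rfl⟩, hzy⟩ := h
    have hle : (terminals r.2).count a ≤ l :=
      List.count_le_length.trans ((List.length_filterMap_le _ _).trans (hl r hr))
    have := ih hzy
    simp only [terminals_append, terminals_cons_inl, List.count_append, Nat.succ_mul] at this ⊢
    omega

end Finiteness

section LowerBound

theorem EqL.mem_iff {T : Type} {L₁ L₂ : Set (List T)} (h : EqL L₁ L₂) {w : List T} (hw : w ≠ []) :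
    w ∈ L₁ ↔ w ∈ L₂ := by
  simpa [hw] using Set.ext_iff.1 h w

variable {T : Type} [LinearOrder T] {G : CDGS T} {f : Mode} {s : Finset T} {b M : ℕ}

/-- A pivot for the letters `i` and `j` is a sentential form `y` in the derivation of a word with
`n` occurrences of both letters, such that `y` already contains all occurrences of `j`. -/
structure CDGS.IsPivot (G : CDGS T) (f : Mode) (n : ℕ) (i j : T) (y : SForm T) : Prop where
  transGen_start : TransGen (G.ModeStep f) [Sum.inl G.start] y
  exists_word : ∃ w : List T,
    ReflTransGen (G.ModeStep f) y (w.map Sum.inr) ∧ w.count i = n ∧ w.count j = n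
  count_eq : (terminals y).count j = n

/-- The derivation of the second word is followed up to its pivot, and continued as in the
derivation of the first word. -/
theorem CDGS.IsPivot.exists_mem_lang {n n' : ℕ} {i j : T} {y y' : SForm T}
    (hy : G.IsPivot f n i j y) (hy' : G.IsPivot f n' i j y') (hskel : skeleton y = skeleton y')
    (hi : (terminals y).count i = (terminals y').count i) :
    ∃ u ∈ G.lang f, u.count i = n ∧ u.count j = n' := by
  obtain ⟨w, hyw, hwi, hwj⟩ := hy.exists_word
  obtain ⟨u, hu, hcount⟩ := exists_mem_lang_splice hyw hy'.transGen_start hskel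
  have hyj := hy.count_eq
  have hyj' := hy'.count_eq
  exact ⟨u, hu, by grind, by grind⟩

/-- The pivot is the first sentential form in which all letters of `s` occur: a letter missing from
its predecessor is still rare there, and since the gaps between its terminals cover only few letters
of `s`, another letter has already been produced completely. -/
theorem CDGS.exists_isPivot {l n : ℕ} (hl : ∀ c, ∀ r ∈ G.comp c, r.2.length ≤ l)
    (hf : ∀ P k (y : SForm T), modeOK P f k y → k ≤ M) (hcard : 2 * b < s.card) {w : List T}
    (hw : w.Pairwise (· ≤ ·)) (hn : 1 ≤ n) (hs : ∀ a ∈ s, w.count a = n)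
    (hmem : w ∈ G.langB f b) :
    ∃ y, ∃ i ∈ s, ∃ j ∈ s, G.IsPivot f n i j y ∧ ntCount y ≤ b ∧
      (terminals y).count i ≤ M * l := by
  obtain ⟨hstart, hder⟩ := hmem
  have hsw : ∀ a ∈ s, a ∈ w := fun a ha => List.count_pos_iff.1 ((hs a ha).symm ▸ hn)
  obtain ⟨a, ha⟩ : s.Nonempty := Finset.card_pos.1 (by omega)
  obtain ⟨x, y, hx, hxy, hy, hxs, hys⟩ :=
    exists_reflTransGen_of_not_of (Q := fun x => ∀ a ∈ s, a ∈ terminals x) hder.to_reflTransGen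
      (fun h => absurd (h a ha) (by simp [terminals])) (by simpa using hsw)
  have hyb : ntCount y ≤ b := hxy.ntCount_le (ntCount_le_of_reflTransGen hx hstart)
  have hyw := ReflTransGen.mono (fun _ _ h => ModeStepB.modeStep h) _ _ hy
  have hsx := ReflTransGen.mono (fun _ _ h => ModeStepB.modeStep h) _ _ hx
  obtain ⟨j, hj, hyj⟩ := (expands_of_reflTransGen hyw).exists_count_eq hw (by omega) hys
  push Not at hxs
  obtain ⟨i, hi, hix⟩ := hxs
  obtain ⟨c, k, hsteps, hmode⟩ := hxy.modeStep
  have hyi : (terminals y).count i ≤ k * l := by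
    simpa [List.count_eq_zero_of_not_mem hix] using hsteps.count_terminals_le (hl c) i
  exact ⟨y, i, hi, j, hj, ⟨.tail' hsx hxy.modeStep, ⟨w, hyw, hs i hi, hs j hj⟩,
    hyj.trans (hs j hj)⟩, hyb, hyi.trans (Nat.mul_le_mul_right l (hf _ k y hmode))⟩

theorem CDGS.exists_isPivot_isPivot (hf : ∀ P k (y : SForm T), modeOK P f k y → k ≤ M)
    (hcard : 2 * b < s.card)
    (hdiag : ∀ n, 1 ≤ n → ∃ w ∈ G.langB f b, w.Pairwise (· ≤ ·) ∧ ∀ a ∈ s, w.count a = n) :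
    ∃ n n', 1 ≤ n ∧ 1 ≤ n' ∧ n ≠ n' ∧ ∃ i ∈ s, ∃ j ∈ s, ∃ y y', G.IsPivot f n i j y ∧
      G.IsPivot f n' i j y' ∧ skeleton y = skeleton y' ∧
      (terminals y).count i = (terminals y').count i := by
  obtain ⟨l, hl⟩ := G.exists_length_le
  obtain ⟨a, -⟩ : s.Nonempty := Finset.card_pos.1 (by omega)
  have : Nonempty T := ⟨a⟩
  have hpivot : ∀ n, 1 ≤ n → ∃ (y : SForm T) (i j : T), i ∈ s ∧ j ∈ s ∧ G.IsPivot f n i j y ∧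
      ntCount y ≤ b ∧ (terminals y).count i ≤ M * l := by
    intro n hn
    obtain ⟨w, hwG, hw, hcount⟩ := hdiag n hn
    obtain ⟨y, i, hi, j, hj, h⟩ := exists_isPivot hl hf hcard hw hn hcount hwG
    exact ⟨y, i, j, hi, hj, h⟩
  choose! y i j hi hj hy hyb hyi using hpivot
  let key (n : ℕ) := (skeleton (y n), i n, j n, (terminals (y n)).count (i n))
  have hkey : Set.MapsTo key (Set.Ici 1)
      ({l | l.length ≤ b ∧ ∀ A ∈ l, A ∈ G.nonterminals} ×ˢ
        (s : Set T) ×ˢ (s : Set T) ×ˢ Set.Iic (M * l)) := fun n hn =>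
    ⟨⟨(length_skeleton _).trans_le (hyb n hn),
      CDGS.mem_nonterminals_of_reflTransGen (hy n hn).transGen_start.to_reflTransGen⟩,
      hi n hn, hj n hn, hyi n hn⟩
  obtain ⟨n, hn, n', hn', hne, heq⟩ :=
    (Set.Ici_infinite 1).exists_ne_map_eq_of_mapsTo hkey
      ((finite_setOf_length_le_forall_mem G.finite_nonterminals b).prod
        (s.finite_toSet.prod (s.finite_toSet.prod (Set.finite_Iic _))))
  simp only [key, Prod.mk.injEq] at heq
  obtain ⟨hskel, hii, hjj, hcount⟩ := heq
  exact ⟨n, n', hn, hn', hne, i n, hi n hn, j n, hj n hn, y n, y n', hy n hn,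
    hii ▸ hjj ▸ hy n' hn', hskel, hii ▸ hcount⟩

theorem notMem_CDFamIndInf {L : Set (List T)} (lf : Bool)
    (hf : ∀ P k (y : SForm T), modeOK P f k y → k ≤ M) (hcard : 2 * b < s.card)
    (hdiag : ∀ n, 1 ≤ n → ∃ w ∈ L, w.Pairwise (· ≤ ·) ∧ ∀ a ∈ s, w.count a = n)
    (hchain : ∀ i ∈ s, ∀ j ∈ s,
      (∀ w ∈ L, w.count i ≤ w.count j) ∨ ∀ w ∈ L, w.count j ≤ w.count i) :
    L ∉ CDFamIndInf T lf f b := by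
  rintro ⟨G, -, hGL, hind⟩
  obtain ⟨a, ha⟩ : s.Nonempty := Finset.card_pos.1 (by omega)
  have hmem_iff {w : List T} {c : T} (hw : 1 ≤ w.count c) : w ∈ G.lang f ↔ w ∈ L :=
    hGL.mem_iff (List.ne_nil_of_mem (List.count_pos_iff.1 hw))
  obtain ⟨n, n', hn, hn', hne, i, hi, j, hj, y, y', hy, hy', hskel, hcount⟩ :=
    G.exists_isPivot_isPivot hf hcard fun n hn => by
      obtain ⟨w, hw, hsorted, hcount⟩ := hdiag n hn
      exact ⟨w, hind ((hmem_iff (hn.trans_eq (hcount a ha).symm)).2 hw), hsorted, hcount⟩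
  obtain ⟨u, hu, hui, huj⟩ := hy.exists_mem_lang hy' hskel hcount
  obtain ⟨v, hv, hvi, hvj⟩ := hy'.exists_mem_lang hy hskel.symm hcount.symm
  rw [hmem_iff (hn.trans_eq hui.symm)] at hu
  rw [hmem_iff (hn'.trans_eq hvi.symm)] at hv
  rcases hchain i hi j hj with hle | hle
  · exact hne (Nat.le_antisymm (by simpa only [hui, huj] using hle u hu)
      (by simpa only [hvi, hvj] using hle v hv))
  · exact hne (Nat.le_antisymm (by simpa only [hvi, hvj] using hle v hv)
      (by simpa only [hui, huj] using hle u hu))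

end LowerBound

theorem CDGS.modeStep_conj_t_eq_iff {T : Type} {G : CDGS T} {m : ℕ} {x y : SForm T} :
    G.ModeStep (.conj .t (.eq m)) x y ↔
      ∃ i, StepsN (G.comp i) m x y ∧ ¬∃ z, RStep (G.comp i) y z := by
  constructor
  · rintro ⟨i, k, hsteps, hterm, hk⟩
    obtain rfl : k = m := hk
    exact ⟨i, hsteps, hterm⟩
  · rintro ⟨i, hsteps, hterm⟩
    exact ⟨i, m, hsteps, hterm, rfl⟩

namespace Witness

/-- The phases of a slot of the witness system: `A`, `A'` for the slots of the first group, and `B`,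
`B'`, `E` for those of the second group. -/
inductive Phase
  | A | A' | B | B' | E
  deriving Encodable

/-- The nonterminals of the witness system; `start j` belongs to the chain of rules leading to the
initial form, and `slot σ j` marks the middle of the `j`-th block in phase `σ`. -/
inductive Nonterminal
  | start (j : ℕ)
  | slot (σ : Phase) (j : ℕ)
  deriving Encodable

/-- `move c σ = some (d, τ)` means that component `c` rewrites the slots in phase `σ`: it inserts
`d` letters on either side and changes the phase to `τ`, where `none` stands for the removal of the
slot. -/
def move : Fin 4 → Phase → Option (ℕ × Option Phase)
  | 0, .B => some (1, some .B')
  | 1, .A => some (1, some .A')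
  | 1, .B => some (0, some .E)
  | 2, .A' => some (0, some .A)
  | 2, .B' => some (0, some .B)
  | 2, .E => some (1, none)
  | 3, .B' => some (0, some .B)
  | 3, .A => some (1, none)
  | _, _ => none

/-- The state of a group of blocks: the common phase of its slots (`none` if they have been removed)
and the number of letters on either side of each slot. -/
abbrev State := Option Phase × ℕ

/-- The number of steps that component `c` makes on each block of a group in a given state, and the
resulting state. -/
def act (c : Fin 4) (g : State) : ℕ × State :=
  match g.1.bind (move c) with
  | none => (0, g)
  | some (d, τ) => (1, τ, g.2 + d)

theorem act_act (c : Fin 4) (g : State) : (act c (act c g).2).1 = 0 := by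
  obtain ⟨_ | σ, n⟩ := g
  · rfl
  · fin_cases c <;> cases σ <;> rfl

theorem act_snd_of_fst_eq_zero {c : Fin 4} {g : State} (h : (act c g).1 = 0) :
    (act c g).2 = g := by
  unfold act at h ⊢
  split at h <;> simp_all

variable {T : Type} (a : ℕ → T) (m : ℕ)

/-- The `j`-th block of a group in state `g`, pumping the letters `a (2 * j)` and
`a (2 * j + 1)`. -/
def block (g : State) (j : ℕ) : SForm T :=
  List.replicate g.2 (Sum.inr (a (2 * j))) ++
    (g.1.map fun σ => Sum.inl (Encodable.encode (Nonterminal.slot σ j))).toList ++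
    List.replicate g.2 (Sum.inr (a (2 * j + 1)))

/-- The sentential form made of a group of `m` blocks in state `g` followed by a group of `m` blocks
in state `h`. -/
def form (g h : State) : SForm T :=
  (List.range' 0 m).flatMap (block a g) ++ (List.range' m m).flatMap (block a h)

/-- The sentential form reached from the start symbol after `j ≤ m` steps. The chain has length `m`
so that a component which does nothing else makes exactly `m` steps. -/
def chain (j : ℕ) : SForm T :=
  if j = m then form a m (some .A, 0) (some .B, 0)
  else [Sum.inl (Encodable.encode (Nonterminal.start j))]

/-- The rules of component `c`: the chain of start rules, and the rules prescribed by `move`. -/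
def rules (c : Fin 4) : List (Rule T) :=
  ((List.range m).map fun j => (Encodable.encode (Nonterminal.start j), chain a m (j + 1))) ++
    (List.range (2 * m)).flatMap fun j =>
      [Phase.A, .A', .B, .B', .E].filterMap fun σ => (move c σ).map fun (d, τ) =>
        (Encodable.encode (Nonterminal.slot σ j), block a (τ, d) j)

/-- The witness system. In the mode `t ∧ = m` a component can be used on two groups of `m` blocks if
and only if it rewrites the slots of exactly one of the groups. -/
def system : CDGS T where
  deg := 4
  start := Encodable.encode (Nonterminal.start 0)
  comp := rules a m

variable {a m} {c : Fin 4} {g h : State} {s s' : State × State} {j l : ℕ} {y : SForm T}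
  {r : Rule T} {w : List T}

theorem mem_rules : r ∈ rules a m c ↔
    (∃ j < m, r = (Encodable.encode (Nonterminal.start j), chain a m (j + 1))) ∨
      ∃ j < 2 * m, ∃ σ d τ, move c σ = some (d, τ) ∧
        r = (Encodable.encode (Nonterminal.slot σ j), block a (τ, d) j) := by
  have hphase (σ : Phase) : σ ∈ [Phase.A, .A', .B, .B', .E] := by cases σ <;> simp
  simp only [rules, List.mem_append, List.mem_map, List.mem_flatMap, List.mem_filterMap,
    List.mem_range, Option.map_eq_some_iff, Prod.exists, hphase, true_and]
  grind

theorem deterministic_rules (a : ℕ → T) (m : ℕ) (c : Fin 4) : Deterministic (rules a m c) := by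
  intro r hr r' hr' heq
  rcases mem_rules.1 hr with ⟨j, -, rfl⟩ | ⟨j, -, σ, d, τ, hmove, rfl⟩ <;>
    rcases mem_rules.1 hr' with ⟨j', -, rfl⟩ | ⟨j', -, σ', d', τ', hmove', rfl⟩ <;>
    have heq := Encodable.encode_injective heq
  · obtain rfl := Nonterminal.start.inj heq
    rfl
  · cases heq
  · cases heq
  · obtain ⟨rfl, rfl⟩ := Nonterminal.slot.inj heq
    rw [hmove] at hmove'
    cases hmove'
    rfl

theorem block_add (τ : Option Phase) (n d j : ℕ) :
    block a (τ, n + d) j = List.replicate n (Sum.inr (a (2 * j))) ++ block a (τ, d) j ++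
      List.replicate n (Sum.inr (a (2 * j + 1))) := by
  simp only [block]
  rw [List.replicate_add, Nat.add_comm n d, List.replicate_add]
  simp only [List.append_assoc]

theorem inl_mem_block {A : ℕ} : Sum.inl A ∈ block a g j ↔
    ∃ σ, g.1 = some σ ∧ A = Encodable.encode (Nonterminal.slot σ j) := by
  simp [block, List.mem_replicate, eq_comm]

theorem inl_mem_form {A : ℕ} : Sum.inl A ∈ form a m g h ↔
    (∃ j < m, Sum.inl A ∈ block a g j) ∨ ∃ j, m ≤ j ∧ j < 2 * m ∧ Sum.inl A ∈ block a h j := by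
  simp [form, List.mem_range'_1, two_mul, and_assoc]

theorem not_exists_rStep_block (hg : (act c g).1 = 0) :
    ¬∃ y, RStep (rules a m c) (block a g j) y := by
  simp only [exists_rStep_iff, inl_mem_block]
  rintro ⟨r, hr, σ, hσ, hrσ⟩
  rcases mem_rules.1 hr with ⟨j', -, rfl⟩ | ⟨j', -, σ', d, τ, hmove, rfl⟩ <;>
    have heq := Encodable.encode_injective hrσ
  · cases heq
  · obtain ⟨rfl, rfl⟩ := Nonterminal.slot.inj heq
    simp [act, hσ, hmove] at hg

theorem not_exists_rStep_form (hg : (act c g).1 = 0) (hh : (act c h).1 = 0) :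
    ¬∃ y, RStep (rules a m c) (form a m g h) y := by
  simp only [exists_rStep_iff, inl_mem_form]
  rintro ⟨r, hr, ⟨j, -, hrj⟩ | ⟨j, -, -, hrj⟩⟩
  · exact not_exists_rStep_block hg (exists_rStep_iff.2 ⟨r, hr, hrj⟩)
  · exact not_exists_rStep_block hh (exists_rStep_iff.2 ⟨r, hr, hrj⟩)

theorem stepsN_block (hj : j < 2 * m) (c : Fin 4) (g : State) :
    StepsN (rules a m c) (act c g).1 (block a g j) (block a (act c g).2 j) := by
  unfold act
  split
  · rfl
  · next d τ hmove =>
    obtain ⟨σ, hσ, hmove⟩ := Option.bind_eq_some_iff.1 hmove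
    refine ⟨_, ⟨_, mem_rules.2 (Or.inr ⟨j, hj, σ, d, τ, hmove, rfl⟩),
      List.replicate g.2 (Sum.inr (a (2 * j))), List.replicate g.2 (Sum.inr (a (2 * j + 1))),
      by simp [block, hσ], block_add τ g.2 d j⟩, rfl⟩

theorem stepsN_form (c : Fin 4) (g h : State) :
    StepsN (rules a m c) (m * ((act c g).1 + (act c h).1)) (form a m g h)
      (form a m (act c g).2 (act c h).2) := by
  have hgroup (s : ℕ) (hs : s + m ≤ 2 * m) (g : State) :
      StepsN (rules a m c) (m * (act c g).1) ((List.range' s m).flatMap (block a g))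
        ((List.range' s m).flatMap (block a (act c g).2)) := by
    simpa using stepsN_flatMap (s := List.range' s m) fun j hj =>
      stepsN_block (a := a) (m := m) (j := j) (by grind) c g
  rw [Nat.mul_add]
  exact (hgroup 0 (by omega) g).append (hgroup m (by omega) h)

theorem stepsN_start (hm : 1 ≤ m) (c : Fin 4) :
    StepsN (rules a m c) m [Sum.inl (Encodable.encode (Nonterminal.start 0))]
      (form a m (some .A, 0) (some .B, 0)) := by
  have hchain (j : ℕ) (hj : j < m) : RStep (rules a m c) (chain a m j) (chain a m (j + 1)) :=
    ⟨_, mem_rules.2 (Or.inl ⟨j, hj, rfl⟩), [], [], by simp [chain, hj.ne], by simp⟩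
  simpa [chain, (Nat.ne_of_lt hm)] using stepsN_of_forall_rStep hchain

theorem not_exists_rStep_form_act (c : Fin 4) (g h : State) :
    ¬∃ y, RStep (rules a m c) (form a m (act c g).2 (act c h).2) y :=
  not_exists_rStep_form (act_act c g) (act_act c h)

/-- The action of the witness system on the states of its two groups of blocks: some component moves
exactly one of the groups. -/
def Transition (s s' : State × State) : Prop :=
  ∃ c, (act c s.1).1 + (act c s.2).1 = 1 ∧ s' = ((act c s.1).2, (act c s.2).2)

theorem modeStep_form_iff (hm : 1 ≤ m) :
    (system a m).ModeStep (.conj .t (.eq m)) (form a m s.1 s.2) y ↔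
      ∃ s', Transition s s' ∧ y = form a m s'.1 s'.2 := by
  rw [CDGS.modeStep_conj_t_eq_iff]
  constructor
  · rintro ⟨c, hsteps, hterm⟩
    obtain ⟨hk, rfl⟩ := (deterministic_rules a m c).stepsN_unique hsteps hterm
      (stepsN_form c s.1 s.2) (not_exists_rStep_form_act c s.1 s.2)
    exact ⟨_, ⟨c, (Nat.eq_of_mul_eq_mul_left hm (by rw [← hk, Nat.mul_one])), rfl⟩, rfl⟩
  · rintro ⟨_, ⟨c, hc, rfl⟩, rfl⟩
    have hsteps := stepsN_form (a := a) (m := m) c s.1 s.2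
    rw [hc, Nat.mul_one] at hsteps
    exact ⟨c, hsteps, not_exists_rStep_form_act c s.1 s.2⟩

/-- The states of the two groups in the initial form. -/
abbrev initial : State × State := ((some .A, 0), some .B, 0)

theorem modeStep_start_iff (hm : 1 ≤ m) :
    (system a m).ModeStep (.conj .t (.eq m)) [Sum.inl (system a m).start] y ↔
      y = form a m initial.1 initial.2 := by
  rw [CDGS.modeStep_conj_t_eq_iff]
  constructor
  · rintro ⟨c, hsteps, hterm⟩
    obtain ⟨hk, rfl⟩ := (deterministic_rules a m c).stepsN_unique hsteps hterm
      ((stepsN_start hm c).trans (stepsN_form c _ _)) (not_exists_rStep_form_act c _ _)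
    have hzero : (act c initial.1).1 + (act c initial.2).1 = 0 := by
      simpa [Nat.ne_of_gt hm] using hk
    rw [act_snd_of_fst_eq_zero (Nat.add_eq_zero_iff.1 hzero).1,
      act_snd_of_fst_eq_zero (Nat.add_eq_zero_iff.1 hzero).2]
  · rintro rfl
    exact ⟨(2 : Fin 4), stepsN_start hm 2, not_exists_rStep_form rfl rfl⟩

theorem mem_lang_iff (hm : 1 ≤ m) : w ∈ (system a m).lang (.conj .t (.eq m)) ↔
    ∃ s, ReflTransGen Transition initial s ∧ form a m s.1 s.2 = w.map Sum.inr := by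
  simp only [CDGS.lang, Set.mem_ofPred_eq, TransGen.head'_iff, modeStep_start_iff hm,
    exists_eq_left]
  constructor
  · intro hder
    generalize hz : w.map Sum.inr = z at hder
    clear hz
    induction hder with
    | refl => exact ⟨initial, .refl, rfl⟩
    | tail _ hstep ih =>
      obtain ⟨s, hs, rfl⟩ := ih
      obtain ⟨s', hs', rfl⟩ := (modeStep_form_iff hm).1 hstep
      exact ⟨s', hs.tail hs', rfl⟩
  · rintro ⟨s, hs, hw⟩
    rw [← hw]
    exact hs.lift (fun s : State × State => form a m s.1 s.2) fun _ t ht =>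
      (modeStep_form_iff hm).2 ⟨t, ht, rfl⟩

/-- The invariant of the witness system: the second group pumps ahead of the first one. Pairs of
phases which do not occur in a derivation are excluded, and `A'`, `E` is a dead end. -/
def Balanced (s : State × State) : Prop :=
  match s.1.1, s.2.1 with
  | some .A, some .B' => s.1.2 + 1 ≤ s.2.2
  | some .A, some .B | some .A', some .B | some .A', some .B' | none, none => s.1.2 ≤ s.2.2
  | some .A', some .E => True
  | none, some .B | none, some .B' | none, some .E => s.1.2 ≤ s.2.2 + 1
  | _, _ => False

theorem Balanced.transition (hs : Balanced s) (h : Transition s s') : Balanced s' := by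
  obtain ⟨c, hc, rfl⟩ := h
  obtain ⟨⟨_ | σ, p⟩, ⟨_ | τ, q⟩⟩ := s <;> fin_cases c <;> try cases σ
  all_goals try cases τ
  all_goals simp_all [Balanced, act, move] <;> omega

theorem balanced_of_reflTransGen (h : ReflTransGen Transition initial s) : Balanced s := by
  induction h with
  | refl => exact Nat.le_refl 0
  | tail _ hstep ih => exact ih.transition hstep

theorem reflTransGen_transition_pump (n : ℕ) :
    ReflTransGen Transition initial ((some .A, n), some .B, n) := by
  induction n with
  | zero => exact .refl
  | succ n ih =>
    calc
      ReflTransGen Transition initial ((some .A, n), some .B, n) := ih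
      Transition _ ((some .A, n), some .B', n + 1) := ⟨0, rfl, rfl⟩
      Transition _ ((some .A', n + 1), some .B', n + 1) := ⟨1, rfl, rfl⟩
      Transition _ ((some .A', n + 1), some .B, n + 1) := ⟨3, rfl, rfl⟩
      Transition _ ((some .A, n + 1), some .B, n + 1) := ⟨2, rfl, rfl⟩

theorem reflTransGen_transition_none (n : ℕ) :
    ReflTransGen Transition initial ((none, n + 1), none, n + 1) :=
  calc
    ReflTransGen Transition initial ((some .A, n), some .B, n) := reflTransGen_transition_pump n
    Transition _ ((none, n + 1), some .B, n) := ⟨3, rfl, rfl⟩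
    Transition _ ((none, n + 1), some .E, n) := ⟨1, rfl, rfl⟩
    Transition _ ((none, n + 1), none, n + 1) := ⟨2, rfl, rfl⟩

/-- The word with `p` occurrences of each of the first `2 * m` letters and `q` occurrences of each
of the next `2 * m` letters. -/
def word (a : ℕ → T) (m p q : ℕ) : List T :=
  (List.range (4 * m)).flatMap fun l => List.replicate (if l < 2 * m then p else q) (a l)

theorem flatMap_range'_append {α : Type*} (f : ℕ → List α) (i n : ℕ) :
    (List.range' i n).flatMap (fun j => f (2 * j) ++ f (2 * j + 1)) =
      (List.range' (2 * i) (2 * n)).flatMap f := by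
  induction n generalizing i with
  | zero => rfl
  | succ n ih => simp [List.range'_succ, Nat.mul_succ, ih]

theorem form_none (a : ℕ → T) (m p q : ℕ) :
    form a m (none, p) (none, q) = (word a m p q).map Sum.inr := by
  have hgroup (i n : ℕ) : (List.range' i m).flatMap (block a (none, n)) =
      (List.range' (2 * i) (2 * m)).flatMap fun l => List.replicate n (Sum.inr (a l)) := by
    rw [← flatMap_range'_append]
    exact List.flatMap_congr fun j _ => by simp [block]
  have hrange : List.range (4 * m) = List.range' 0 (2 * m) ++ List.range' (2 * m) (2 * m) := by
    rw [List.range_eq_range', show 4 * m = 2 * m + 2 * m by omega, ← List.range'_append_1,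
      Nat.zero_add]
  simp only [form, hgroup, word, hrange, List.flatMap_append, List.map_append, List.map_flatMap,
    List.map_replicate]
  congr 1 <;> refine List.flatMap_congr fun l hl => ?_ <;> grind

theorem eq_none_of_form_eq_map_inr (hm : 1 ≤ m) (h : form a m s.1 s.2 = w.map Sum.inr) :
    s.1.1 = none ∧ s.2.1 = none := by
  have hnot (A : ℕ) : Sum.inl A ∉ form a m s.1 s.2 := by simp [h]
  simp only [inl_mem_form, inl_mem_block] at hnot
  constructor <;> by_contra hne <;> obtain ⟨σ, hσ⟩ := Option.ne_none_iff_exists'.1 hne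
  · exact hnot _ (Or.inl ⟨0, hm, σ, hσ, rfl⟩)
  · exact hnot _ (Or.inr ⟨m, le_rfl, by omega, σ, hσ, rfl⟩)

theorem exists_eq_word_of_mem_lang (hm : 1 ≤ m)
    (hw : w ∈ (system a m).lang (.conj .t (.eq m))) : ∃ p q, p ≤ q ∧ w = word a m p q := by
  obtain ⟨s, hs, hform⟩ := (mem_lang_iff hm).1 hw
  obtain ⟨h₁, h₂⟩ := eq_none_of_form_eq_map_inr hm hform
  obtain ⟨⟨_, p⟩, ⟨_, q⟩⟩ := s
  cases h₁
  cases h₂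
  rw [form_none] at hform
  exact ⟨p, q, balanced_of_reflTransGen hs, (Sum.inr_injective.list_map hform).symm⟩

theorem word_mem_lang (hm : 1 ≤ m) {n : ℕ} (hn : 1 ≤ n) :
    word a m n n ∈ (system a m).lang (.conj .t (.eq m)) := by
  obtain ⟨n, rfl⟩ := Nat.exists_eq_add_of_le' hn
  exact (mem_lang_iff hm).2 ⟨_, reflTransGen_transition_none n, form_none a m _ _⟩

theorem eq_one_of_move_eq_none {σ : Phase} {d : ℕ} (h : move c σ = some (d, none)) : d = 1 := by
  unfold move at h
  split at h <;> simp_all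

theorem lamFree_system (a : ℕ → T) (m : ℕ) : (system a m).LamFree := by
  intro c r hr
  rcases mem_rules.1 hr with ⟨j, hj, rfl⟩ | ⟨j, -, σ, d, τ, hmove, rfl⟩
  · unfold chain
    split
    · exact List.ne_nil_of_mem
        (inl_mem_form.2 (Or.inl ⟨0, Nat.zero_lt_of_lt hj, inl_mem_block.2 ⟨_, rfl, rfl⟩⟩))
    · exact List.cons_ne_nil _ _
  · cases τ with
    | some τ => exact List.ne_nil_of_mem (inl_mem_block.2 ⟨τ, rfl, rfl⟩)
    | none =>
      simp [block, eq_one_of_move_eq_none hmove]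

theorem pairwise_word [LinearOrder T] (ha : StrictMonoOn a (Set.Iio (4 * m))) (p q : ℕ) :
    (word a m p q).Pairwise (· ≤ ·) := by
  refine List.pairwise_flatMap.2 ⟨fun l _ => List.pairwise_replicate_of_refl, ?_⟩
  refine List.pairwise_lt_range.imp_of_mem fun {i j} hi hj hij x hx y hy => ?_
  obtain rfl := List.eq_of_mem_replicate hx
  obtain rfl := List.eq_of_mem_replicate hy
  exact (ha (List.mem_range.1 hi) (List.mem_range.1 hj) hij).le

theorem count_word [DecidableEq T] (ha : Set.InjOn a (Set.Iio (4 * m))) (hl : l < 4 * m)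
    (p q : ℕ) : (word a m p q).count (a l) = if l < 2 * m then p else q := by
  have hmem : l ∈ List.range (4 * m) := List.mem_range.2 hl
  rw [word, List.count_flatMap, List.sum_map_eq_nsmul_single l]
  · simp [List.count_eq_one_of_mem List.nodup_range hmem]
  · intro i hi hmem'
    simp [List.count_replicate, ha.eq_iff (List.mem_range.1 hmem') hl, hi]

theorem count_le_count_of_mem_lang [DecidableEq T] (hm : 1 ≤ m)
    (ha : Set.InjOn a (Set.Iio (4 * m))) (hw : w ∈ (system a m).lang (.conj .t (.eq m)))
    {i j : ℕ} (hij : i ≤ j) (hj : j < 4 * m) : w.count (a i) ≤ w.count (a j) := by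
  obtain ⟨p, q, hpq, rfl⟩ := exists_eq_word_of_mem_lang hm hw
  rw [count_word ha (hij.trans_lt hj), count_word ha hj]
  grind

end Witness

section Separation

variable {T : Type} {m b : ℕ}

theorem exists_strictMonoOn_Iio [LinearOrder T] {k : ℕ} (hk : 1 ≤ k) (hT : (k : ℕ∞) ≤ ENat.card T) :
    ∃ a : ℕ → T, StrictMonoOn a (Set.Iio k) := by
  obtain ⟨t, -, ht⟩ := Set.exists_subset_encard_eq (s := (Set.univ : Set T))
    (hT.trans_eq (Set.encard_univ T).symm)
  have htfin : t.Finite := Set.finite_of_encard_eq_coe ht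
  let e := htfin.toFinset.orderEmbOfFin (k := k) (by
    rw [← Nat.cast_inj (R := ℕ∞), ← ht, htfin.encard_eq_coe_toFinset_card])
  refine ⟨fun l => e ⟨l % k, Nat.mod_lt l hk⟩, fun i hi j hj hij => e.strictMono ?_⟩
  simpa [Nat.mod_eq_of_lt hi, Nat.mod_eq_of_lt hj] using hij

theorem lang_system_mem_CDFam (a : ℕ → T) (m : ℕ) (f : Mode) :
    (Witness.system a m).lang f ∈ CDFam T true 4 f :=
  ⟨_, le_rfl, fun _ => Witness.lamFree_system a m, rfl⟩

theorem lang_system_notMem_CDFamIndInf [LinearOrder T] {a : ℕ → T}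
    (ha : StrictMonoOn a (Set.Iio (4 * m))) (lf : Bool) (hb : b < 2 * m) :
    (Witness.system a m).lang (.conj .t (.eq m)) ∉ CDFamIndInf T lf (.conj .t (.eq m)) b := by
  have hm : 1 ≤ m := by omega
  have hs {c : T} : c ∈ (Finset.range (4 * m)).image a ↔ ∃ l < 4 * m, a l = c := by simp
  refine notMem_CDFamIndInf (M := m) (s := (Finset.range (4 * m)).image a) lf
    (fun P k y hk => hk.2.le) ?_ ?_ ?_
  · rw [Finset.card_image_of_injOn (by simpa using ha.injOn), Finset.card_range]
    omega
  · intro n hn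
    refine ⟨_, Witness.word_mem_lang hm hn, Witness.pairwise_word ha n n, fun c hc => ?_⟩
    obtain ⟨l, hl, rfl⟩ := hs.1 hc
    rw [Witness.count_word ha.injOn hl, ite_self]
  · intro c hc c' hc'
    obtain ⟨i, hi, rfl⟩ := hs.1 hc
    obtain ⟨j, hj, rfl⟩ := hs.1 hc'
    rcases le_total i j with hij | hij
    · exact Or.inl fun w hw => Witness.count_le_count_of_mem_lang hm ha.injOn hw hij hj
    · exact Or.inr fun w hw => Witness.count_le_count_of_mem_lang hm ha.injOn hw hij hi

theorem exists_mem_CDFam_notMem_CDFamIndInf (hT : ((4 * m : ℕ) : ℕ∞) ≤ ENat.card T)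
    (hb : b < 2 * m) : ∃ L ∈ CDFam T true 4 (.conj .t (.eq m)),
      ∀ lf, L ∉ CDFamIndInf T lf (.conj .t (.eq m)) b := by
  obtain ⟨_, -⟩ := exists_wellFoundedLT T
  obtain ⟨a, ha⟩ := exists_strictMonoOn_Iio (by omega) hT
  exact ⟨_, lang_system_mem_CDFam a m _, fun lf => lang_system_notMem_CDFamIndInf ha lf hb⟩

end Separation

section Inclusions

variable {T : Type} {lf : Bool} {f : Mode} {n b : ℕ}

theorem CDFamInd_subset_CDFam : CDFamInd T lf n f b ⊆ CDFam T lf n f :=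
  fun _ ⟨G, hdeg, hlf, hL, _⟩ => ⟨G, hdeg, hlf, hL⟩

theorem CDFamInd_subset_CDFamIndInf : CDFamInd T lf n f b ⊆ CDFamIndInf T lf f b :=
  fun _ ⟨G, _, h⟩ => ⟨G, h⟩

theorem CDFamIndInf_subset_CDFamInf : CDFamIndInf T lf f b ⊆ CDFamInf T lf f :=
  fun _ ⟨G, hlf, hL, _⟩ => ⟨G, hlf, hL⟩

theorem CDFam_subset_CDFamInf : CDFam T lf n f ⊆ CDFamInf T lf f :=
  fun _ ⟨G, _, h⟩ => ⟨G, h⟩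

theorem CDFam_true_subset {n₀ : ℕ} (hn : n₀ ≤ n) : CDFam T true n₀ f ⊆ CDFam T lf n f :=
  fun _ ⟨G, hdeg, hlf, hL⟩ => ⟨G, hdeg.trans hn, fun _ => hlf rfl, hL⟩

end Inclusions

theorem stmt18_general {T : Type} {m b : ℕ} (lf : Bool)
    (hT : ((4 * m : ℕ) : ℕ∞) ≤ ENat.card T) (hb : b < 2 * m) :
    (∀ n : ℕ, 4 ≤ n →
      CDFamInd T lf n (Mode.conj Mode.t (Mode.eq m)) b ⊂
        CDFam T lf n (Mode.conj Mode.t (Mode.eq m))) ∧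
    CDFamIndInf T lf (Mode.conj Mode.t (Mode.eq m)) b ⊂
      CDFamInf T lf (Mode.conj Mode.t (Mode.eq m)) := by
  obtain ⟨L, hL, hnot⟩ := exists_mem_CDFam_notMem_CDFamIndInf hT hb
  refine ⟨fun n hn => Set.ssubset_iff_exists.2 ⟨CDFamInd_subset_CDFam, L, ?_, ?_⟩,
    Set.ssubset_iff_exists.2 ⟨CDFamIndInf_subset_CDFamInf, L, ?_, hnot lf⟩⟩
  · exact CDFam_true_subset hn hL
  · exact fun h => hnot lf (CDFamInd_subset_CDFamIndInf h)
  · exact CDFam_subset_CDFamInf (CDFam_true_subset le_rfl hL)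

/-- For every m ∈ ℕ (positive) and every n ≥ 4, as well as for an
unbounded number of components, L_m(CD_n, CF[−λ], (t∧=m)) ⊊ L(CD_n, CF[−λ], (t∧=m)),
both with and without erasing rules. -/
theorem stmt18 (lf : Bool) (m : ℕ) (hm : 1 ≤ m) :
    (∀ n : ℕ, 4 ≤ n →
      CDFamInd ℕ lf n (Mode.conj Mode.t (Mode.eq m)) m ⊂
        CDFam ℕ lf n (Mode.conj Mode.t (Mode.eq m))) ∧
    CDFamIndInf ℕ lf (Mode.conj Mode.t (Mode.eq m)) m ⊂
      CDFamInf ℕ lf (Mode.conj Mode.t (Mode.eq m)) :=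
  stmt18_general lf (by simp) (by omega)

end CDHybrid
end

section
/- For every m ∈ ℕ, under the finite index restriction the appearance checking feature does not increase the generative power of programmed grammars: L_m(P, CF[−λ], ac) = L_m(P, CF[−λ]), both with and without erasing rules. -/
namespace CDHybrid

/-!
Under an index bound `m`, a simulating grammar can remember in its labels the multiset of all
nonterminals of the current sentential form, since only finitely many multisets are possible. The
label then decides whether the left-hand side of the current rule occurs. If it does not, the
failure step is replaced by a successful application of a rule `b → b` to a recorded nonterminal
`b`; when there is none, the form is terminal and no further step is needed. As a derivation may
begin at any label, a fresh start symbol is used to force the record to be correct initially.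
-/

section Nonterminals

variable {T : Type}

/-- The nonterminals of a sentential form, with multiplicity. -/
def ntMultiset (x : SForm T) : Multiset ℕ := (x.filterMap Sum.getLeft? : List ℕ)

@[simp]
theorem ntMultiset_nil : ntMultiset ([] : SForm T) = 0 := rfl

@[simp]
theorem ntMultiset_append (x y : SForm T) :
    ntMultiset (x ++ y) = ntMultiset x + ntMultiset y := by
  simp [ntMultiset]

@[simp]
theorem ntMultiset_inl_cons (a : ℕ) (x : SForm T) :
    ntMultiset (Sum.inl a :: x) = a ::ₘ ntMultiset x := by
  simp [ntMultiset]

theorem mem_ntMultiset {a : ℕ} {x : SForm T} : a ∈ ntMultiset x ↔ Sum.inl a ∈ x := by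
  simp [ntMultiset]

theorem card_ntMultiset (x : SForm T) : (ntMultiset x).card = ntCount x := by
  induction x with
  | nil => rfl
  | cons s x ih =>
    cases s <;> simpa [ntMultiset, ntCount, List.filter_cons, List.filterMap_cons] using ih

theorem ntMultiset_rewrite (u v z : SForm T) (a : ℕ) :
    ntMultiset (u ++ z ++ v) =
      (ntMultiset (u ++ Sum.inl a :: v)).erase a + ntMultiset z := by
  simp only [ntMultiset_append, ntMultiset_inl_cons, Multiset.add_cons, Multiset.erase_cons_head]
  abel

theorem le_nsmul_val_of_card_le {α : Type*} {N : Multiset α} {m : ℕ} {V : Finset α}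
    (hcard : N.card ≤ m) (hmem : ∀ a ∈ N, a ∈ V) : N ≤ m • V.val := by
  classical
  refine Multiset.le_iff_count.2 fun a => ?_
  by_cases ha : a ∈ N
  · rw [Multiset.count_nsmul, Multiset.count_eq_one_of_mem V.nodup (hmem a ha), mul_one]
    exact (Multiset.count_le_card a N).trans hcard
  · simp only [Multiset.count_eq_zero_of_notMem ha, Nat.zero_le]

end Nonterminals

/-- A programmed grammar without failure fields whose labels form an arbitrary type instead of an
initial segment of `ℕ`. -/
structure LabelledGrammar (T Λ : Type) where
  start : ℕ
  rule : Λ → Rule T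
  succ : Λ → Set Λ

namespace LabelledGrammar

variable {T Λ : Type} (H : LabelledGrammar T Λ)

/-- One derivation step on pairs (sentential form, label). -/
def Step (p q : SForm T × Λ) : Prop :=
  ∃ u v : SForm T, p.1 = u ++ Sum.inl (H.rule p.2).1 :: v ∧
    q.1 = u ++ (H.rule p.2).2 ++ v ∧ q.2 ∈ H.succ p.2

/-- The generated language; as in `PG.lang`, the initial label is arbitrary. -/
def lang : Set (List T) :=
  {w | ∃ l₁ l₂ : Λ, Relation.ReflTransGen H.Step ([Sum.inl H.start], l₁) (w.map Sum.inr, l₂)}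

/-- The words having a derivation of index at most `m`. -/
def langB (m : ℕ) : Set (List T) :=
  {w | ∃ l₁ l₂ : Λ, ntCount ([Sum.inl H.start] : SForm T) ≤ m ∧
    Relation.ReflTransGen (fun p q => H.Step p q ∧ ntCount q.1 ≤ m)
      ([Sum.inl H.start], l₁) (w.map Sum.inr, l₂)}

variable [Finite Λ]

/-- The programmed grammar obtained by numbering the labels. -/
noncomputable def toPG : PG T where
  start := H.start
  nLab := Nat.card Λ
  rule i := H.rule ((Finite.equivFin Λ).symm i)
  succ i := (Finite.equivFin Λ).symm ⁻¹' H.succ ((Finite.equivFin Λ).symm i)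
  fail _ := ∅

theorem toPG_noAC : H.toPG.NoAC := fun _ => rfl

theorem toPG_lamFree (h : ∀ l, (H.rule l).2 ≠ []) : H.toPG.LamFree := fun _ => h _

theorem lang_toPG_subset : H.toPG.lang ⊆ H.lang := by
  rintro w ⟨i, j, h⟩
  exact ⟨_, _, h.lift (Prod.map id (Finite.equivFin Λ).symm)
    fun p q hpq => hpq.resolve_right fun hfail => hfail.2.2⟩

theorem langB_subset_toPG (m : ℕ) : H.langB m ⊆ H.toPG.langB m := by
  rintro w ⟨l₁, l₂, hstart, h⟩
  let e := Finite.equivFin Λ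
  refine ⟨_, _, hstart, h.lift (Prod.map id e) ?_⟩
  rintro ⟨x, l⟩ ⟨y, l'⟩ ⟨⟨u, v, hx, hy, hl⟩, hcount⟩
  have hl : e.symm (e l') ∈ H.succ (e.symm (e l)) := by
    simpa only [Equiv.symm_apply_apply] using hl
  exact ⟨Or.inl ⟨u, v, by simpa [toPG, e] using hx, by simpa [toPG, e] using hy, hl⟩, hcount⟩

end LabelledGrammar

namespace PG

variable {T : Type} (G : PG T)

theorem langB_subset_lang (m : ℕ) : G.langB m ⊆ G.lang := by
  rintro w ⟨r₁, r₂, -, h⟩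
  exact ⟨r₁, r₂, h.lift id fun _ _ => And.left⟩

/-- The start symbol and the nonterminals of right-hand sides. A left-hand side outside this set
never occurs in a sentential form, so it need not be recorded. -/
def nonterminals : Finset ℕ :=
  insert G.start (Finset.univ.biUnion fun r => (ntMultiset (G.rule r).2).toFinset)

theorem start_mem_nonterminals : G.start ∈ G.nonterminals :=
  Finset.mem_insert_self _ _

theorem mem_nonterminals_of_mem_rule {r : Fin G.nLab} {a : ℕ}
    (ha : a ∈ ntMultiset (G.rule r).2) : a ∈ G.nonterminals :=
  Finset.mem_insert_of_mem
    (Finset.mem_biUnion.2 ⟨r, Finset.mem_univ r, Multiset.mem_toFinset.2 ha⟩)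

/-- The effect of a derivation step on pairs (multiset of nonterminals, label). -/
def NtStep (p q : Multiset ℕ × Fin G.nLab) : Prop :=
  ((G.rule p.2).1 ∈ p.1 ∧ q.1 = p.1.erase (G.rule p.2).1 + ntMultiset (G.rule p.2).2 ∧
      q.2 ∈ G.succ p.2) ∨
  ((G.rule p.2).1 ∉ p.1 ∧ q.1 = p.1 ∧ q.2 ∈ G.fail p.2)

variable {G}

theorem PStep.ntStep {p q : SForm T × Fin G.nLab} (h : G.PStep p q) :
    G.NtStep (ntMultiset p.1, p.2) (ntMultiset q.1, q.2) := by
  rcases h with ⟨u, v, hx, hy, hs⟩ | ⟨hx, hy, hs⟩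
  · refine Or.inl ⟨?_, ?_, hs⟩
    · simp [hx]
    · rw [hx, hy, ntMultiset_rewrite]
  · exact Or.inr ⟨mt mem_ntMultiset.1 hx, congrArg ntMultiset hy, hs⟩

theorem PStep.eq_of_ntMultiset_eq_zero {p q : SForm T × Fin G.nLab} (h : G.PStep p q)
    (hp : ntMultiset p.1 = 0) : q.1 = p.1 := by
  rcases h with ⟨u, v, hx, -, -⟩ | ⟨-, hy, -⟩
  · simp [hx] at hp
  · exact hy

theorem NtStep.mem_nonterminals {p q : Multiset ℕ × Fin G.nLab} (h : G.NtStep p q)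
    (hp : ∀ a ∈ p.1, a ∈ G.nonterminals) : ∀ a ∈ q.1, a ∈ G.nonterminals := by
  rcases h with ⟨-, hq, -⟩ | ⟨-, hq, -⟩ <;> rw [hq]
  · intro a ha
    exact (Multiset.mem_add.1 ha).elim (fun h => hp a (Multiset.mem_of_mem_erase h))
      G.mem_nonterminals_of_mem_rule
  · exact hp

variable (G)

/-- The rule applied in place of the rule `A → z` labelled `r` when `N` is the multiset of
nonterminals of the sentential form: `A → z` itself if `A ∈ N`, and otherwise `b → b` for the least
`b ∈ N`. For `N = 0` the latter is the junk rule `0 → 0`. -/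
noncomputable def trackedRule (N : Multiset ℕ) (r : Fin G.nLab) : Rule T :=
  if (G.rule r).1 ∈ N then G.rule r else (sInf {b | b ∈ N}, [Sum.inl (sInf {b | b ∈ N})])

variable {G}

theorem trackedRule_of_mem {N : Multiset ℕ} {r : Fin G.nLab} (h : (G.rule r).1 ∈ N) :
    G.trackedRule N r = G.rule r :=
  if_pos h

theorem trackedRule_of_notMem {N : Multiset ℕ} {r : Fin G.nLab} (h : (G.rule r).1 ∉ N) :
    G.trackedRule N r = (sInf {b | b ∈ N}, [Sum.inl (sInf {b | b ∈ N})]) :=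
  if_neg h

theorem trackedRule_fst_mem {N : Multiset ℕ} (hN : N ≠ 0) (r : Fin G.nLab) :
    (G.trackedRule N r).1 ∈ N := by
  by_cases h : (G.rule r).1 ∈ N
  · rwa [trackedRule_of_mem h]
  · rw [trackedRule_of_notMem h]
    exact Nat.sInf_mem (Multiset.exists_mem_of_ne_zero hN)

theorem LamFree.trackedRule_ne_nil (hG : G.LamFree) (N : Multiset ℕ) (r : Fin G.nLab) :
    (G.trackedRule N r).2 ≠ [] := by
  unfold trackedRule
  split_ifs
  · exact hG r
  · exact List.cons_ne_nil _ _

variable (G)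

/-- The multisets that a label can record, namely those containing only elements of
`G.nonterminals`, each at most `m` times. There are finitely many, and all multisets of at most `m`
such elements are among them. -/
abbrev Record (m : ℕ) := Set.Iic (m • G.nonterminals.val)

/-- The simulation of the derivations of index at most `m`, with fresh start symbol `K`. The label
`some (N, r)` stands for the label `r` at a sentential form with multiset of nonterminals `N`, and
`none` labels the initial rule. -/
noncomputable def tracking (m K : ℕ) : LabelledGrammar T (Option (G.Record m × Fin G.nLab)) where
  start := K
  rule
    | none => (K, [Sum.inl G.start])
    | some (N, r) => G.trackedRule N r
  succ
    | none => {l | ∃ N r, l = some (N, r) ∧ (N : Multiset ℕ) = {G.start}}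
    | some (N, r) => {l | ∃ M s, l = some (M, s) ∧ (N : Multiset ℕ) ≠ 0 ∧ G.NtStep (N, r) (M, s)}

variable {G} {m K : ℕ} {x y : SForm T} {N M : G.Record m} {r s : Fin G.nLab}

theorem LamFree.tracking_rule_ne_nil (hG : G.LamFree) (l : Option (G.Record m × Fin G.nLab)) :
    ((G.tracking m K).rule l).2 ≠ [] := by
  rcases l with _ | ⟨N, r⟩
  · exact List.cons_ne_nil _ _
  · exact hG.trackedRule_ne_nil N r

theorem exists_record (hcount : ntCount x ≤ m) (hx : ∀ a ∈ ntMultiset x, a ∈ G.nonterminals) :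
    ∃ N : G.Record m, (N : Multiset ℕ) = ntMultiset x :=
  ⟨⟨ntMultiset x, le_nsmul_val_of_card_le ((card_ntMultiset x).trans_le hcount) hx⟩, rfl⟩

theorem Record.mem_nonterminals {a : ℕ} (ha : a ∈ (N : Multiset ℕ)) : a ∈ G.nonterminals :=
  Multiset.mem_of_mem_nsmul (Multiset.mem_of_le N.2 ha)

theorem PStep.tracking_step (h : G.PStep (x, r) (y, s)) (hN : (N : Multiset ℕ) = ntMultiset x)
    (hM : (M : Multiset ℕ) = ntMultiset y) (hx : ntMultiset x ≠ 0) :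
    (G.tracking m K).Step (x, some (N, r)) (y, some (M, s)) := by
  have hsucc : some (M, s) ∈ (G.tracking m K).succ (some (N, r)) :=
    ⟨M, s, rfl, hN ▸ hx, by rw [hN, hM]; exact h.ntStep⟩
  suffices hrewrite : ∃ u v, x = u ++ Sum.inl (G.trackedRule N r).1 :: v ∧
      y = u ++ (G.trackedRule N r).2 ++ v by
    obtain ⟨u, v, hu, hv⟩ := hrewrite
    exact ⟨u, v, hu, hv, hsucc⟩
  rw [hN]
  rcases h with ⟨u, v, (hu : x = u ++ Sum.inl (G.rule r).1 :: v), hv, -⟩ | ⟨hA, hyx, -⟩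
  · have hA : (G.rule r).1 ∈ ntMultiset x := mem_ntMultiset.2 (by simp [hu])
    rw [trackedRule_of_mem hA]
    exact ⟨u, v, hu, hv⟩
  · have hA : (G.rule r).1 ∉ ntMultiset x := mt mem_ntMultiset.1 hA
    obtain ⟨u, v, huv⟩ := List.append_of_mem (mem_ntMultiset.1 (trackedRule_fst_mem hx r))
    refine ⟨u, v, huv, ?_⟩
    rw [trackedRule_of_notMem hA] at huv ⊢
    simpa using hyx.trans huv

theorem pstep_of_tracking_step {l : Option (G.Record m × Fin G.nLab)}
    (h : (G.tracking m K).Step (x, some (N, r)) (y, l)) (hN : (N : Multiset ℕ) = ntMultiset x) :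
    ∃ M s, l = some (M, s) ∧ (M : Multiset ℕ) = ntMultiset y ∧ G.PStep (x, r) (y, s) := by
  obtain ⟨u, v, hx, hy, M, s, hl, -, hstep⟩ := h
  change x = u ++ Sum.inl (G.trackedRule N r).1 :: v at hx
  change y = u ++ (G.trackedRule N r).2 ++ v at hy
  suffices (M : Multiset ℕ) = ntMultiset y ∧ G.PStep (x, r) (y, s) from ⟨M, s, hl, this⟩
  rcases hstep with ⟨hA, (hM : (M : Multiset ℕ) = _), hs⟩ | ⟨hA, hM, hs⟩
  · rw [trackedRule_of_mem hA] at hx hy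
    refine ⟨?_, Or.inl ⟨u, v, hx, hy, hs⟩⟩
    rw [hM, hN, hx, hy, ntMultiset_rewrite]
  · rw [trackedRule_of_notMem hA] at hx hy
    have hyx : y = x := by rw [hx, hy, List.append_assoc, List.singleton_append]
    refine ⟨hM.trans (hyx ▸ hN), Or.inr ⟨?_, hyx, hs⟩⟩
    exact fun hmem => hA (hN ▸ mem_ntMultiset.2 hmem)

theorem eq_start_of_tracking_step_none {l : Option (G.Record m × Fin G.nLab)}
    (h : (G.tracking m K).Step ([Sum.inl K], none) (y, l)) :
    y = [Sum.inl G.start] ∧ ∃ N r, l = some (N, r) ∧ (N : Multiset ℕ) = ntMultiset y := by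
  obtain ⟨u, v, hx, hy, N, r, hl, hN⟩ := h
  obtain ⟨rfl, hv⟩ | ⟨-, hv⟩ := List.singleton_eq_append_iff.1 hx
  · obtain rfl := List.tail_eq_of_cons_eq hv
    obtain rfl : y = [Sum.inl G.start] := hy
    exact ⟨rfl, N, r, hl, hN⟩
  · exact absurd hv (List.cons_ne_nil _ _)

theorem not_tracking_step_some (hK : K ∉ G.nonterminals)
    (q : SForm T × Option (G.Record m × Fin G.nLab)) :
    ¬ (G.tracking m K).Step ([Sum.inl K], some (N, r)) q := by
  rintro ⟨u, v, hx, -, M, s, -, hN, -⟩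
  change [Sum.inl K] = u ++ Sum.inl (G.trackedRule N r).1 :: v at hx
  have hmem : Sum.inl (G.trackedRule N r).1 ∈ ([Sum.inl K] : SForm T) :=
    hx ▸ List.mem_append_right u List.mem_cons_self
  obtain rfl : (G.trackedRule N r).1 = K := Sum.inl_injective (List.mem_singleton.1 hmem)
  exact hK (Record.mem_nonterminals (trackedRule_fst_mem hN r))

theorem derivation_of_tracking (hK : K ∉ G.nonterminals)
    {l₀ : Option (G.Record m × Fin G.nLab)} {q : SForm T × Option (G.Record m × Fin G.nLab)}
    (h : Relation.ReflTransGen (G.tracking m K).Step ([Sum.inl K], l₀) q) :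
    q.1 = [Sum.inl K] ∨ ∃ N r r₀, q.2 = some (N, r) ∧ (N : Multiset ℕ) = ntMultiset q.1 ∧
      Relation.ReflTransGen G.PStep ([Sum.inl G.start], r₀) (q.1, r) := by
  induction h with
  | refl => exact Or.inl rfl
  | @tail p q _ hstep ih =>
    obtain ⟨x, l⟩ := p
    obtain ⟨y, l'⟩ := q
    right
    obtain rfl | ⟨N, r, r₀, rfl, hN, hder⟩ := ih
    · rcases l with _ | ⟨N, r⟩
      · obtain ⟨rfl, N, r, rfl, hN⟩ := eq_start_of_tracking_step_none hstep
        exact ⟨N, r, r, rfl, hN, .refl⟩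
      · exact absurd hstep (not_tracking_step_some hK _)
    · obtain ⟨M, s, rfl, hM, hstep⟩ := pstep_of_tracking_step hstep hN
      exact ⟨M, s, r₀, rfl, hM, hder.tail hstep⟩

theorem lang_tracking_subset (hK : K ∉ G.nonterminals) : (G.tracking m K).lang ⊆ G.lang := by
  rintro w ⟨l₀, l, h⟩
  obtain hw | ⟨-, r, r₀, -, -, hder⟩ := derivation_of_tracking hK h
  · obtain ⟨-, -, -, ⟨⟩, -⟩ := List.map_eq_cons_iff.1 hw
  · exact ⟨r₀, r, hder⟩

theorem tracking_start_step (hN : (N : Multiset ℕ) = {G.start}) :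
    (G.tracking m K).Step ([Sum.inl K], none) ([Sum.inl G.start], some (N, r)) :=
  ⟨[], [], rfl, rfl, N, r, rfl, hN⟩

/-- The label `r'` may differ from that of `q` once `q.1` is terminal: failure steps at a terminal
form only change the label, and they are not simulated. -/
theorem tracking_of_derivation (hm : ntCount ([Sum.inl G.start] : SForm T) ≤ m)
    {r₀ : Fin G.nLab} {q : SForm T × Fin G.nLab}
    (h : Relation.ReflTransGen (fun p q => G.PStep p q ∧ ntCount q.1 ≤ m)
      ([Sum.inl G.start], r₀) q) :
    ∃ (N : G.Record m) (r' : Fin G.nLab), (N : Multiset ℕ) = ntMultiset q.1 ∧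
      (ntMultiset q.1 ≠ 0 → r' = q.2) ∧
      Relation.ReflTransGen (fun p q => (G.tracking m K).Step p q ∧ ntCount q.1 ≤ m)
        ([Sum.inl K], none) (q.1, some (N, r')) := by
  induction h with
  | refl =>
    obtain ⟨N, hN⟩ := exists_record hm (by simpa using G.start_mem_nonterminals)
    exact ⟨N, r₀, hN, fun _ => rfl, .single ⟨tracking_start_step hN, hm⟩⟩
  | @tail p q _ hstep ih =>
    obtain ⟨x, r⟩ := p
    obtain ⟨y, s⟩ := q
    obtain ⟨N, r', hN, hr, hder⟩ := ih
    obtain ⟨hstep, hy⟩ := hstep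
    by_cases hx : ntMultiset x = 0
    · obtain rfl : y = x := hstep.eq_of_ntMultiset_eq_zero hx
      exact ⟨N, r', hN, fun h => absurd hx h, hder⟩
    · obtain rfl : r' = r := hr hx
      obtain ⟨M, hM⟩ := exists_record hy
        (hstep.ntStep.mem_nonterminals fun a ha => Record.mem_nonterminals (hN ▸ ha))
      exact ⟨M, s, hM, fun _ => rfl, hder.tail ⟨hstep.tracking_step hN hM hx, hy⟩⟩

theorem langB_subset_tracking : G.langB m ⊆ (G.tracking m K).langB m := by
  rintro w ⟨r₀, r, hm, h⟩
  obtain ⟨N, r', -, -, hder⟩ := tracking_of_derivation hm h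
  exact ⟨none, some (N, r'), hm, hder⟩

theorem exists_noAC_simulation (hG : G.lang ⊆ G.langB m) :
    ∃ G' : PG T, (G.LamFree → G'.LamFree) ∧ G'.NoAC ∧ G'.lang = G.lang ∧
      G'.lang ⊆ G'.langB m := by
  obtain ⟨K, hK⟩ := Infinite.exists_notMem_finset G.nonterminals
  let H := G.tracking m K
  have hsound : H.toPG.lang ⊆ G.lang := H.lang_toPG_subset.trans (lang_tracking_subset hK)
  have hcomplete : G.lang ⊆ H.toPG.langB m :=
    hG.trans (langB_subset_tracking.trans (H.langB_subset_toPG m))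
  exact ⟨H.toPG, fun hlam => H.toPG_lamFree hlam.tracking_rule_ne_nil, H.toPG_noAC,
    hsound.antisymm (hcomplete.trans (H.toPG.langB_subset_lang m)), hsound.trans hcomplete⟩

end PG

theorem stmt19_general {T : Type} (lf : Bool) (m : ℕ) :
    PFamInd T lf true m = PFamInd T lf false m := by
  ext L
  constructor
  · rintro ⟨G, hlam, -, hL, hind⟩
    obtain ⟨G', hlam', hac', hlang, hind'⟩ := PG.exists_noAC_simulation hind
    exact ⟨G', hlam' ∘ hlam, fun _ => hac', hlang ▸ hL, hind'⟩
  · rintro ⟨G, hlam, -, hL, hind⟩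
    exact ⟨G, hlam, nofun, hL, hind⟩

/-- For every m ∈ ℕ (positive), under the finite index restriction the
appearance checking feature does not increase the generative power of programmed
grammars: L_m(P, CF[−λ], ac) = L_m(P, CF[−λ]), with and without erasing rules. -/
theorem stmt19 (lf : Bool) (m : ℕ) (hm : 1 ≤ m) :
    PFamInd ℕ lf true m = PFamInd ℕ lf false m :=
  stmt19_general lf m

end CDHybrid
end
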